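/- Let M : ℂ₊ → B(H) be a Herglotz operator with M(z₀)⁻¹ ∈ B(H) for some (and hence all) z₀ ∈ ℂ₊. Then there exist a family of bounded self-adjoint, weakly (Lebesgue) measurable operators {Ξ(λ)}_{λ∈ℝ} ⊂ B(H) satisfying 0 ≤ Ξ(λ) ≤ I_H for a.e. λ ∈ ℝ, and a bounded self-adjoint operator C = C* ∈ B(H), such that log(M(z)) = C + ∫_ℝ dλ Ξ(λ) ((λ − z)⁻¹ − λ(1 + λ²)⁻¹) for all z ∈ ℂ₊, the integral taken in the weak sense (i.e., the scalar identity holds for the quadratic forms (f, log(M(z)) g) for all f, g ∈ H). -/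

import Mathlib

open Complex Filter MeasureTheory TopologicalSpace ContinuousLinearMap
open scoped InnerProductSpace Topology

noncomputable section

namespace SpectralShift

variable {H : Type*} [NormedAddCommGroup H] [InnerProductSpace ℂ H] [CompleteSpace H]

/-- The imaginary part `(T - T*)/(2i)` of a bounded operator. -/
def imPart (T : H →L[ℂ] H) : H →L[ℂ] H :=
  ((2 * Complex.I)⁻¹ : ℂ) • (T - ContinuousLinearMap.adjoint T)

/-- An operator-valued Herglotz function: analytic on the open upper half-plane with
nonnegative imaginary part there. -/
def IsHerglotz (M : ℂ → H →L[ℂ] H) : Prop :=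
  DifferentiableOn ℂ M {z : ℂ | 0 < z.im} ∧ ∀ z : ℂ, 0 < z.im → (imPart (M z)).IsPositive

/-- The integrand `(T + iλ)⁻¹ - (1 + iλ)⁻¹ I` in the integral representation of `log T`. -/
def logIntegrand (T : H →L[ℂ] H) (t : ℝ) : H →L[ℂ] H :=
  Ring.inverse (T + ((t : ℂ) * Complex.I) • (1 : H →L[ℂ] H)) -
    (((1 : ℂ) + (t : ℂ) * Complex.I)⁻¹) • (1 : H →L[ℂ] H)

/-- `log T = -i ∫₀^∞ ((T + iλ)⁻¹ - (1 + iλ)⁻¹ I) dλ` as a norm-convergent improper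
Riemann integral, for a dissipative boundedly invertible `T`. -/
def opLog (T : H →L[ℂ] H) : H →L[ℂ] H :=
  limUnder atTop (fun R : ℝ => (-Complex.I) • ∫ t in (0:ℝ)..R, logIntegrand T t)

/-- The logarithm `log S = (log S*)*` of an operator `S` with `-S` dissipative. -/
def opLogAnti (T : H →L[ℂ] H) : H →L[ℂ] H :=
  ContinuousLinearMap.adjoint (opLog (ContinuousLinearMap.adjoint T))

/-- The logarithm of a Herglotz-type operator family on `ℂ ∖ ℝ`, using `log T` in the
upper half-plane and the convention `log S = (log S*)*` in the lower half-plane. -/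
def logHerg (Φ : ℂ → H →L[ℂ] H) (z : ℂ) : H →L[ℂ] H :=
  if 0 < z.im then opLog (Φ z) else opLogAnti (Φ z)

/-- The logarithm of an anti-Herglotz-type operator family on `ℂ ∖ ℝ` (nonpositive
imaginary part in the upper half-plane). -/
def logAntiHerg (Φ : ℂ → H →L[ℂ] H) (z : ℂ) : H →L[ℂ] H :=
  if 0 < z.im then opLogAnti (Φ z) else opLog (Φ z)

/-- Trace class: absolute summability of the diagonal in every Hilbert basis. -/
def IsTraceClass (T : H →L[ℂ] H) : Prop :=
  ∀ (w : Set H) (b : HilbertBasis w ℂ H), Summable fun i => ‖⟪(b i : H), T (b i)⟫_ℂ‖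

/-- The trace, computed in a fixed Hilbert basis (basis-independent for trace
class operators). -/
def trH (T : H →L[ℂ] H) : ℂ :=
  ∑' i, ⟪((exists_hilbertBasis ℂ H).choose_spec.choose i : H),
    T ((exists_hilbertBasis ℂ H).choose_spec.choose i)⟫_ℂ

/-- The trace norm, via duality with bounded operators (the correct value for trace
class operators). -/
def traceNorm (T : H →L[ℂ] H) : ℝ :=
  ⨆ B : {B : H →L[ℂ] H // ‖B‖ ≤ 1}, ‖trH (T * (B : H →L[ℂ] H))‖

/-- Hilbert-Schmidt operators. -/
def IsHilbertSchmidt (K : H →L[ℂ] H) : Prop :=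
  ∀ (w : Set H) (b : HilbertBasis w ℂ H), Summable fun i => ‖K (b i)‖ ^ 2

/-- A (possibly unbounded) self-adjoint operator in `H`: a densely defined symmetric
operator possessing everywhere-defined bounded resolvents at every non-real point. -/
structure SelfAdjointOp (H : Type*) [NormedAddCommGroup H] [InnerProductSpace ℂ H]
    [CompleteSpace H] where
  dom : Submodule ℂ H
  dense_dom : Dense (dom : Set H)
  op : dom →ₗ[ℂ] H
  symmetric : ∀ x y : dom, ⟪op x, (y : H)⟫_ℂ = ⟪(x : H), op y⟫_ℂ
  resolvent : ℂ → H →L[ℂ] H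
  resolvent_mem : ∀ {z : ℂ}, z.im ≠ 0 → ∀ x : H, resolvent z x ∈ dom
  op_resolvent : ∀ {z : ℂ} (hz : z.im ≠ 0) (x : H),
    op ⟨resolvent z x, resolvent_mem hz x⟩ - z • resolvent z x = x
  resolvent_op : ∀ {z : ℂ} (hz : z.im ≠ 0) (x : dom),
    resolvent z (op x - z • (x : H)) = x

/-- `B = A + V` for a bounded operator `V` (with `dom B = dom A`). -/
def IsSumOf (B A : SelfAdjointOp H) (V : H →L[ℂ] H) : Prop :=
  B.dom = A.dom ∧ ∀ (x : H) (hxB : x ∈ B.dom) (hxA : x ∈ A.dom),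
    B.op ⟨x, hxB⟩ = A.op ⟨x, hxA⟩ + V x

/-- `R` is the (bounded, everywhere defined) resolvent `(A - z)⁻¹` of `A` at `z`. -/
def SelfAdjointOp.IsResolventAt (A : SelfAdjointOp H) (z : ℂ) (R : H →L[ℂ] H) : Prop :=
  (∀ x : H, R x ∈ A.dom) ∧
  (∀ (x : H) (hx : R x ∈ A.dom), A.op ⟨R x, hx⟩ - z • R x = x) ∧
  (∀ x : A.dom, R (A.op x - z • (x : H)) = x)

/-- `E` is the projection-valued spectral measure of the self-adjoint operator `A`. -/
def IsSpectralMeasure (A : SelfAdjointOp H) (E : Set ℝ → H →L[ℂ] H) : Prop :=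
  (∀ B : Set ℝ, MeasurableSet B → IsSelfAdjoint (E B)) ∧
  (∀ B C : Set ℝ, MeasurableSet B → MeasurableSet C → E B * E C = E (B ∩ C)) ∧
  (E Set.univ = 1) ∧
  (∀ (f : ℕ → Set ℝ), (∀ n, MeasurableSet (f n)) → Pairwise (Function.onFun Disjoint f) →
    ∀ x : H, HasSum (fun n => E (f n) x) (E (⋃ n, f n) x)) ∧
  ∃ μ : H → Measure ℝ,
    (∀ (f : H) (B : Set ℝ), MeasurableSet B → μ f B = ENNReal.ofReal (⟪f, E B f⟫_ℂ).re) ∧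
    ∀ (z : ℂ), z.im ≠ 0 → ∀ f : H,
      ⟪f, A.resolvent z f⟫_ℂ = ∫ l : ℝ, ((l : ℂ) - z)⁻¹ ∂(μ f)

/-- Invertibility of `T` restricted to the range of the orthogonal projection `P`
(for `T` commuting with `P`), with inverse `S` supported in `ran P`. -/
def InvertibleOn (T P : H →L[ℂ] H) : Prop :=
  ∃ S : H →L[ℂ] H, S * P = S ∧ P * S = S ∧ S * (T * P) = P ∧ (P * T) * S = P

/-- The spectral projection `J₊ = (I + J)/2` onto `H₊` for a self-adjoint unitary `J`. -/
def Jplus (J : H →L[ℂ] H) : H →L[ℂ] H := ((2 : ℂ)⁻¹) • (1 + J)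

/-- The spectral projection `J₋ = (I - J)/2` onto `H₋` for a self-adjoint unitary `J`. -/
def Jminus (J : H →L[ℂ] H) : H →L[ℂ] H := ((2 : ℂ)⁻¹) • (1 - J)

/-- `Φ₊(z) = I + J₊ K* (H₀ - z)⁻¹ K J₊`, the operator on `H` inducing `Φ₊(z)` on `H₊`
(and the identity on `H₋`). -/
def PhiPlus (H0 : SelfAdjointOp H) (J K : H →L[ℂ] H) (z : ℂ) : H →L[ℂ] H :=
  1 + Jplus J * (ContinuousLinearMap.adjoint K * H0.resolvent z * K) * Jplus J

/-- `Φ̃₋(z) = I - J₋ K* (H₊ - z)⁻¹ K J₋`, the operator on `H` inducing `Φ̃₋(z)` on `H₋`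
(and the identity on `H₊`). -/
def PhiMinusT (Hp : SelfAdjointOp H) (J K : H →L[ℂ] H) (z : ℂ) : H →L[ℂ] H :=
  1 - Jminus J * (ContinuousLinearMap.adjoint K * Hp.resolvent z * K) * Jminus J

theorem inner_imPart (T : H →L[ℂ] H) (f g : H) :
    ⟪f, imPart T g⟫_ℂ = (2 * Complex.I)⁻¹ * (⟪f, T g⟫_ℂ - (starRingEnd ℂ) ⟪g, T f⟫_ℂ) := by
  simp [imPart, inner_smul_right, inner_sub_right, ContinuousLinearMap.adjoint_inner_right,
    inner_conj_symm]

theorem inner_imPart_self (T : H →L[ℂ] H) (f : H) :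
    ⟪f, imPart T f⟫_ℂ = ((⟪f, T f⟫_ℂ).im : ℂ) := by
  rw [inner_imPart, Complex.sub_conj]
  field_simp
  push_cast
  ring

theorem diss_of_imPart {T : H →L[ℂ] H} (h : (imPart T).IsPositive) (f : H) :
    0 ≤ (⟪f, T f⟫_ℂ).im := by
  have := h.re_inner_nonneg_right f
  rw [inner_imPart_self] at this
  simpa using this

theorem isPositive_of_forall {T : H →L[ℂ] H} (h : ∀ f, ∃ r : ℝ, 0 ≤ r ∧ ⟪f, T f⟫_ℂ = (r : ℂ)) :
    T.IsPositive := by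
  rw [ContinuousLinearMap.isPositive_iff_complex]
  intro x
  obtain ⟨r, hr, h⟩ := h x
  have : ⟪T x, x⟫_ℂ = (r : ℂ) := by
    rw [← inner_conj_symm, h, Complex.conj_ofReal]
  rw [this]
  simpa using hr

theorem coercive_isUnit {A : H →L[ℂ] H} {c : ℝ} (hc : 0 < c)
    (h : ∀ f, c * ‖f‖ ^ 2 ≤ (⟪f, A f⟫_ℂ).im) :
    IsUnit A ∧ ‖Ring.inverse A‖ ≤ c⁻¹ := by
  have h1 : ∀ x, ‖x‖ ^ 2 * c ≤ ‖⟪A x, x⟫_ℂ‖ := fun x => by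
    rw [norm_inner_symm, mul_comm]
    exact (h x).trans ((le_abs_self _).trans (Complex.abs_im_le_norm _))
  have hu : IsUnit A := ContinuousLinearMap.isUnit_of_forall_le_norm_inner_map A
    (c := ⟨c, hc.le⟩) hc h1
  refine ⟨hu, ?_⟩
  refine ContinuousLinearMap.opNorm_le_bound _ (by positivity) fun x => ?_
  set y := Ring.inverse A x with hy
  have hAy : A y = x := by
    have := Ring.mul_inverse_cancel A hu
    have := congrArg (fun T : H →L[ℂ] H => T x) this
    simpa using this
  have h2 := (h1 y).trans (norm_inner_le_norm _ _)
  rw [hAy] at h2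
  by_cases hy0 : ‖y‖ = 0
  · rw [hy0]; positivity
  · have : 0 < ‖y‖ := lt_of_le_of_ne (norm_nonneg _) (Ne.symm hy0)
    rw [inv_mul_eq_div, le_div_iff₀ hc]
    nlinarith

theorem schwarz_pick {m : ℂ → ℂ} (hm : DifferentiableOn ℂ m {z : ℂ | 0 < z.im})
    (hpos : ∀ z : ℂ, 0 < z.im → 0 < (m z).im) {z w : ℂ} (hz : 0 < z.im) (hw : 0 < w.im) :
    ‖m w - m z‖ ≤ ‖(w - z) / (w - (starRingEnd ℂ) z)‖ * ‖m w - (starRingEnd ℂ) (m z)‖ := by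
  have key : ∀ a b : ℂ, 0 < a.im → 0 < b.im → a - (starRingEnd ℂ) b ≠ 0 ∧
      ‖(a - b) / (a - (starRingEnd ℂ) b)‖ < 1 := by
    intro a b ha hb
    have h0 : a - (starRingEnd ℂ) b ≠ 0 := by
      intro h
      have := congrArg Complex.im h
      simp at this
      linarith
    refine ⟨h0, ?_⟩
    rw [norm_div, div_lt_one (norm_pos_iff.mpr h0)]
    apply lt_of_pow_lt_pow_left₀ 2 (norm_nonneg _)
    rw [← Complex.normSq_eq_norm_sq, ← Complex.normSq_eq_norm_sq, Complex.normSq_apply,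
      Complex.normSq_apply]
    simp
    nlinarith [mul_pos ha hb]
  let φ : ℂ → ℂ := fun ω => (z - (starRingEnd ℂ) z * ω) / (1 - ω)
  have hne : ∀ ω ∈ Metric.ball (0:ℂ) 1, 1 - ω ≠ 0 := by
    intro ω hω h
    have : ω = 1 := by linear_combination -h
    simp [this] at hω
  have hφ : ∀ ω ∈ Metric.ball (0:ℂ) 1, 0 < (φ ω).im := by
    intro ω hω
    have h1 := hne ω hω
    have h2 : ω.re ^ 2 + ω.im ^ 2 < 1 := by
      have : ‖ω‖ < 1 := by simpa using hω
      have h3 : ‖ω‖ ^ 2 < 1 := by nlinarith [norm_nonneg ω]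
      rw [← Complex.normSq_eq_norm_sq, Complex.normSq_apply] at h3
      nlinarith
    have h4 : (φ ω).im = z.im * (1 - ω.re ^ 2 - ω.im ^ 2) / Complex.normSq (1 - ω) := by
      simp only [φ, Complex.div_im]
      have : Complex.normSq (1 - ω) ≠ 0 := by simpa using h1
      field_simp
      simp
      ring
    rw [h4]
    apply div_pos _ (Complex.normSq_pos.mpr h1)
    exact mul_pos hz (by linarith)
  let h : ℂ → ℂ := fun ω => (m (φ ω) - m z) / (m (φ ω) - (starRingEnd ℂ) (m z))
  have hφd : DifferentiableOn ℂ φ (Metric.ball 0 1) := by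
    apply DifferentiableOn.div <;> [fun_prop; fun_prop; exact hne]
  have hmφ : DifferentiableOn ℂ (fun ω => m (φ ω)) (Metric.ball 0 1) := hm.comp hφd hφ
  have hd : DifferentiableOn ℂ h (Metric.ball 0 1) := by
    apply DifferentiableOn.div
    · exact hmφ.sub_const _
    · exact hmφ.sub_const _
    · intro ω hω
      exact (key _ _ (hpos _ (hφ ω hω)) (hpos _ hz)).1
  have hmaps : Set.MapsTo h (Metric.ball 0 1) (Metric.closedBall 0 1) := by
    intro ω hω
    rw [mem_closedBall_zero_iff]
    exact (key _ _ (hpos _ (hφ ω hω)) (hpos _ hz)).2.le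
  have h0 : h 0 = 0 := by simp [h, φ]
  have hk := key w z hw hz
  have hfin := Complex.norm_le_norm_of_mapsTo_ball hd hmaps h0 hk.2
  have hφw : φ ((w - z) / (w - (starRingEnd ℂ) z)) = w := by
    have h1 := hk.1
    have h2 : z - (starRingEnd ℂ) z ≠ 0 := (key z z hz hz).1
    have h3 : 1 - (w - z) / (w - (starRingEnd ℂ) z) = (z - (starRingEnd ℂ) z) / (w - (starRingEnd ℂ) z) := by
      field_simp; ring
    simp only [φ, h3]
    field_simp
    ring
  simp only [h, hφw] at hfin
  rw [norm_div, div_le_iff₀ (norm_pos_iff.mpr (key _ _ (hpos _ hw) (hpos _ hz)).1)] at hfin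
  exact hfin

theorem herglotz_diff_le {z w : ℂ} (hz : 0 < z.im) (hw : 0 < w.im) :
    ∃ K : ℝ, 0 < K ∧ ∀ m : ℂ → ℂ, DifferentiableOn ℂ m {z : ℂ | 0 < z.im} →
      (∀ z : ℂ, 0 < z.im → 0 ≤ (m z).im) → ‖m w - m z‖ ≤ K * (m z).im := by
  set ρ := ‖(w - z) / (w - (starRingEnd ℂ) z)‖ with hρ
  have hρ1 : ρ < 1 := by
    have h0 : w - (starRingEnd ℂ) z ≠ 0 := by
      intro h
      have := congrArg Complex.im h
      simp at this
      linarith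
    rw [hρ, norm_div, div_lt_one (norm_pos_iff.mpr h0)]
    apply lt_of_pow_lt_pow_left₀ 2 (norm_nonneg _)
    rw [← Complex.normSq_eq_norm_sq, ← Complex.normSq_eq_norm_sq, Complex.normSq_apply,
      Complex.normSq_apply]
    simp
    nlinarith [mul_pos hz hw]
  have hρ0 : 0 ≤ ρ := norm_nonneg _
  refine ⟨2 / (1 - ρ), by apply div_pos <;> linarith, fun m hm hpos => ?_⟩
  have hδ : ∀ δ : ℝ, 0 < δ → ‖m w - m z‖ ≤ 2 / (1 - ρ) * ((m z).im + δ) := by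
    intro δ hδ
    have h := schwarz_pick (m := fun z => m z + δ * Complex.I) (hm.add_const _)
      (fun z hz => by have := hpos z hz; simp; linarith) hz hw
    rw [← hρ] at h
    simp only [add_sub_add_right_eq_sub] at h
    have h2 : m w + δ * Complex.I - (starRingEnd ℂ) (m z + δ * Complex.I)
        = (m w - m z) + ((2 * ((m z).im + δ) : ℝ) : ℂ) * Complex.I := by
      apply Complex.ext <;> simp <;> ring
    have h3 := norm_add_le (m w - m z) (((2 * ((m z).im + δ) : ℝ) : ℂ) * Complex.I)
    have h4 : ‖((2 * ((m z).im + δ) : ℝ) : ℂ) * Complex.I‖ = 2 * ((m z).im + δ) := by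
      rw [norm_mul, Complex.norm_I, mul_one, Complex.norm_real, Real.norm_eq_abs, abs_of_nonneg]
      have := hpos z hz
      linarith
    rw [h2] at h
    rw [h4] at h3
    rw [div_mul_eq_mul_div, le_div_iff₀ (by linarith)]
    have h5 : 0 ≤ (m z).im + δ := by have := hpos z hz; linarith
    nlinarith
  refine le_of_forall_pos_le_add fun ε hε => ?_
  have hp : 0 < 2 / (1 - ρ) := by apply div_pos <;> linarith
  have := hδ (ε / (2 / (1 - ρ))) (by positivity)
  rwa [mul_add, mul_div_cancel₀ _ hp.ne'] at this

theorem herglotz_isUnit {M : ℂ → H →L[ℂ] H} (hM : IsHerglotz M)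
    {z₀ : ℂ} (hz₀ : 0 < z₀.im) (hM₀ : IsUnit (M z₀)) {z : ℂ} (hz : 0 < z.im) : IsUnit (M z) := by
  obtain ⟨K, hK, hKm⟩ := herglotz_diff_le hz hz₀
  set A := M z₀
  set B := M z
  set D := A - B with hD
  let q : H → ℝ := fun f => (⟪f, B f⟫_ℂ).im
  have hBd : ∀ f, 0 ≤ q f := diss_of_imPart (hM.2 z hz)
  have h1 : ∀ f, ‖⟪f, D f⟫_ℂ‖ ≤ K * q f := by
    intro f
    have := hKm (fun z => ⟪f, M z f⟫_ℂ) ?_ (fun z hz => diss_of_imPart (hM.2 z hz) f)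
    · simpa [hD, inner_sub_right] using this
    · have h2 : DifferentiableOn ℂ (fun z => M z f) {z : ℂ | 0 < z.im} :=
        hM.1.clm_apply (differentiableOn_const f)
      exact ((innerSL ℂ f).differentiable.comp_differentiableOn h2)
  have h2 : ∀ f g, ‖⟪g, D f⟫_ℂ‖ ≤ K * (q f + q g) := by
    intro f g
    have e : 4 * ⟪g, D f⟫_ℂ = ⟪f + g, D (f + g)⟫_ℂ - ⟪f - g, D (f - g)⟫_ℂ
        + Complex.I * ⟪f + Complex.I • g, D (f + Complex.I • g)⟫_ℂ
        - Complex.I * ⟪f - Complex.I • g, D (f - Complex.I • g)⟫_ℂ := by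
      simp only [map_add, map_sub, map_smul, inner_add_left, inner_add_right, inner_sub_left,
        inner_sub_right, inner_smul_left, inner_smul_right, Complex.conj_I]
      ring_nf
      rw [Complex.I_sq]
      ring
    have e2 : q (f + g) + q (f - g) + q (f + Complex.I • g) + q (f - Complex.I • g)
        = 4 * (q f + q g) := by
      simp only [q, map_add, map_sub, map_smul, inner_add_left, inner_add_right, inner_sub_left,
        inner_sub_right, inner_smul_left, inner_smul_right, Complex.conj_I]
      simp
      ring
    have e3 : ‖4 * ⟪g, D f⟫_ℂ‖ = 4 * ‖⟪g, D f⟫_ℂ‖ := by simp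
    have e4 : ‖4 * ⟪g, D f⟫_ℂ‖ ≤ ‖⟪f + g, D (f + g)⟫_ℂ‖ + ‖⟪f - g, D (f - g)⟫_ℂ‖
        + ‖⟪f + Complex.I • g, D (f + Complex.I • g)⟫_ℂ‖
        + ‖⟪f - Complex.I • g, D (f - Complex.I • g)⟫_ℂ‖ := by
      rw [e]
      refine (norm_sub_le _ _).trans ?_
      rw [norm_mul, Complex.norm_I, one_mul]
      gcongr
      refine (norm_add_le _ _).trans ?_
      rw [norm_mul, Complex.norm_I, one_mul]
      gcongr
      exact norm_sub_le _ _
    have := h1 (f + g)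
    have := h1 (f - g)
    have := h1 (f + Complex.I • g)
    have := h1 (f - Complex.I • g)
    nlinarith
  have hqn : ∀ f, q f ≤ ‖f‖ * ‖B f‖ := fun f =>
    (le_abs_self _).trans ((Complex.abs_im_le_norm _).trans (norm_inner_le_norm _ _))
  have hqn2 : ∀ f, q f ≤ ‖B‖ * ‖f‖ ^ 2 := fun f => by
    have := B.le_opNorm f
    have := hqn f
    nlinarith [norm_nonneg f]
  set s : ℝ := 1 / (2 * (K * ‖B‖ + 1)) with hs
  have hs0 : 0 < s := by positivity
  have hs1 : K * ‖B‖ * s ≤ 1 / 2 := by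
    rw [hs]
    have : 0 ≤ K * ‖B‖ := by positivity
    rw [mul_one_div, div_le_iff₀ (by positivity)]
    linarith
  have h3 : ∀ f, s / 2 * ‖D f‖ ^ 2 ≤ K * (‖f‖ * ‖B f‖) := by
    intro f
    have a1 := h2 f ((s : ℂ) • D f)
    have a2 : ‖⟪(s : ℂ) • D f, D f⟫_ℂ‖ = s * ‖D f‖ ^ 2 := by
      rw [inner_smul_left, norm_mul, inner_self_eq_norm_sq_to_K]
      simp [abs_of_pos hs0]
    have a3 := hqn2 ((s : ℂ) • D f)
    rw [norm_smul, Complex.norm_real, Real.norm_eq_abs, abs_of_pos hs0] at a3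
    rw [a2] at a1
    have a4 := hqn f
    have a5 : K * q ((s : ℂ) • D f) ≤ s / 2 * ‖D f‖ ^ 2 := by
      calc K * q ((s : ℂ) • D f) ≤ K * (‖B‖ * (s * ‖D f‖) ^ 2) := by gcongr
        _ = (K * ‖B‖ * s) * (s * ‖D f‖ ^ 2) := by ring
        _ ≤ 1 / 2 * (s * ‖D f‖ ^ 2) := by gcongr
        _ = _ := by ring
    nlinarith
  obtain ⟨c, hc, hcA⟩ : ∃ c : ℝ, 0 < c ∧ ∀ f, c * ‖f‖ ≤ ‖A f‖ := by
    refine ⟨1 / (‖Ring.inverse A‖ + 1), by positivity, fun f => ?_⟩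
    have e : Ring.inverse A (A f) = f := by
      have := congrArg (fun T : H →L[ℂ] H => T f) (Ring.inverse_mul_cancel A hM₀)
      simpa using this
    have := (Ring.inverse A).le_opNorm (A f)
    rw [e] at this
    rw [div_mul_eq_mul_div, one_mul, div_le_iff₀ (by positivity)]
    nlinarith [norm_nonneg (A f)]
  set c' := min (c / 2) (c ^ 2 * s / (8 * K)) with hc'
  have hc'0 : 0 < c' := by positivity
  have h4 : ∀ f, c' * ‖f‖ ≤ ‖B f‖ := by
    intro f
    by_cases hf : ‖f‖ = 0
    · rw [hf]; simp
    have hf0 : 0 < ‖f‖ := lt_of_le_of_ne (norm_nonneg _) (Ne.symm hf)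
    by_contra hcon
    push Not at hcon
    have b1 : ‖B f‖ < c / 2 * ‖f‖ :=
      hcon.trans_le (by gcongr; exact min_le_left _ _)
    have b2 : ‖B f‖ < c ^ 2 * s / (8 * K) * ‖f‖ :=
      hcon.trans_le (by gcongr; exact min_le_right _ _)
    have b3 : c / 2 * ‖f‖ ≤ ‖D f‖ := by
      have : ‖A f‖ ≤ ‖D f‖ + ‖B f‖ := by
        have : A f = D f + B f := by simp [hD]
        rw [this]; exact norm_add_le _ _
      have := hcA f
      linarith
    have b4 := h3 f
    have b5 : (c / 2 * ‖f‖) ^ 2 ≤ ‖D f‖ ^ 2 := by gcongr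
    have b6 : s / 2 * (c / 2 * ‖f‖) ^ 2 ≤ K * (‖f‖ * ‖B f‖) :=
      (by gcongr : s / 2 * (c / 2 * ‖f‖) ^ 2 ≤ s / 2 * ‖D f‖ ^ 2).trans b4
    have b7 : K * (‖f‖ * ‖B f‖) < K * (‖f‖ * (c ^ 2 * s / (8 * K) * ‖f‖)) := by gcongr
    have b8 : K * (‖f‖ * (c ^ 2 * s / (8 * K) * ‖f‖)) = s / 2 * (c / 2 * ‖f‖) ^ 2 := by
      field_simp; ring
    linarith
  rw [ContinuousLinearMap.isUnit_iff_bijective,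
    ContinuousLinearMap.bijective_iff_dense_range_and_antilipschitz]
  refine ⟨?_, ⟨(Real.toNNReal c')⁻¹, ?_⟩⟩
  · rw [Submodule.topologicalClosure_eq_top_iff, Submodule.eq_bot_iff]
    intro g hg
    have g1 : ∀ x, ⟪B x, g⟫_ℂ = 0 := fun x => hg (B x) ⟨x, rfl⟩
    have g2 : ContinuousLinearMap.adjoint B g = 0 := by
      apply ext_inner_left ℂ
      intro x
      rw [ContinuousLinearMap.adjoint_inner_right, g1, inner_zero_right]
    have g3 : ⟪g, imPart B g⟫_ℂ = 0 := by
      rw [inner_imPart]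
      have : ⟪g, B g⟫_ℂ = 0 := by rw [← inner_conj_symm, g1]; simp
      simp [this]
    have g4 : imPart B g = 0 := by
      have hp := hM.2 z hz
      have g5 : ∀ x, q x = (⟪x, B x⟫_ℂ).im := fun _ => rfl
      have qg : q g = 0 := by
        have := inner_imPart_self B g
        rw [g3] at this
        exact_mod_cast this.symm
      have g6 : B g = (2 * Complex.I) • imPart B g := by
        simp only [imPart, ContinuousLinearMap.smul_apply, ContinuousLinearMap.sub_apply, g2,
          sub_zero, smul_smul]
        rw [mul_inv_cancel₀ (by simp), one_smul]
      by_contra hne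
      set v := imPart B g
      have hv : 0 < ‖v‖ := norm_pos_iff.mpr hne
      have g7 : ∀ t : ℝ, q (g + (t : ℂ) • v) = 2 * t * ‖v‖ ^ 2 + t ^ 2 * q v := by
        intro t
        simp only [q, map_add, map_smul, inner_add_left, inner_add_right,
          inner_smul_left, inner_smul_right, Complex.conj_ofReal]
        have i1 : ⟪g, B v⟫_ℂ = 0 := by rw [← inner_conj_symm, g1]; simp
        have i2 : ⟪v, B g⟫_ℂ = 2 * Complex.I * (‖v‖ ^ 2 : ℝ) := by
          rw [g6, inner_smul_right, inner_self_eq_norm_sq_to_K]; simp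
        have i3 : ⟪g, B g⟫_ℂ = 0 := by rw [← inner_conj_symm, g1]; simp
        rw [i1, i2, i3]
        simp only [Complex.add_im, Complex.mul_im, Complex.mul_re, Complex.ofReal_re, Complex.ofReal_im, Complex.I_re,
          Complex.I_im, Complex.zero_im, Complex.zero_re, Complex.re_ofNat, Complex.im_ofNat]
        ring
      have g8 := hBd (g + ((-(‖v‖ ^ 2) / (q v + 1) : ℝ) : ℂ) • v)
      rw [g7] at g8
      have qv := hBd v
      have : 2 * (-‖v‖ ^ 2 / (q v + 1)) * ‖v‖ ^ 2 + (-‖v‖ ^ 2 / (q v + 1)) ^ 2 * q v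
        = - (‖v‖ ^ 2) ^ 2 * (q v + 2) / (q v + 1) ^ 2 := by
        field_simp; ring
      rw [this] at g8
      have : 0 < (‖v‖ ^ 2) ^ 2 * (q v + 2) / (q v + 1) ^ 2 := by positivity
      rw [neg_mul, neg_div] at g8
      linarith
    have g9 : B g = 0 := by
      have : B g = (2 * Complex.I) • imPart B g := by
        simp only [imPart, ContinuousLinearMap.smul_apply, ContinuousLinearMap.sub_apply, g2,
          sub_zero, smul_smul]
        rw [mul_inv_cancel₀ (by simp), one_smul]
      rw [this, g4, smul_zero]
    have := h4 g
    rw [g9, norm_zero] at this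
    have : ‖g‖ ≤ 0 := by
      by_contra h
      push Not at h
      nlinarith
    exact norm_le_zero_iff.mp this
  · refine B.antilipschitz_of_bound fun x => ?_
    rw [NNReal.coe_inv, Real.coe_toNNReal _ hc'0.le, inv_mul_eq_div, le_div_iff₀ hc'0]
    have := h4 x
    linarith

/-- Dissipativity, through the quadratic form. -/
def Diss (T : H →L[ℂ] H) : Prop := ∀ f, 0 ≤ (⟪f, T f⟫_ℂ).im

/-- The resolvent `(T + it)⁻¹`. -/
def res (T : H →L[ℂ] H) (t : ℝ) : H →L[ℂ] H :=
  Ring.inverse (T + ((t : ℂ) * Complex.I) • (1 : H →L[ℂ] H))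

theorem im_inner_add_smul (T : H →L[ℂ] H) (ζ : ℂ) (f : H) :
    (⟪f, (T + ζ • (1 : H →L[ℂ] H)) f⟫_ℂ).im = (⟪f, T f⟫_ℂ).im + ζ.im * ‖f‖ ^ 2 := by
  simp only [ContinuousLinearMap.add_apply, ContinuousLinearMap.smul_apply,
    ContinuousLinearMap.one_apply, inner_add_right, inner_smul_right, inner_self_eq_norm_sq_to_K]
  rw [Complex.add_im, Complex.mul_im]
  have : ((‖f‖ : ℂ) ^ 2) = ((‖f‖ ^ 2 : ℝ) : ℂ) := by push_cast; rfl
  erw [this]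
  simp only [Complex.ofReal_re, Complex.ofReal_im]
  ring

theorem add_smul_unit {T : H →L[ℂ] H} (hT : Diss T) {ζ : ℂ} (hζ : 0 < ζ.im) :
    IsUnit (T + ζ • (1 : H →L[ℂ] H)) ∧ ‖Ring.inverse (T + ζ • (1 : H →L[ℂ] H))‖ ≤ ζ.im⁻¹ := by
  apply coercive_isUnit hζ
  intro f
  rw [im_inner_add_smul]
  have := hT f
  linarith

theorem res_unit {T : H →L[ℂ] H} (hT : Diss T) (hu : IsUnit T) {t : ℝ} (ht : 0 ≤ t) :
    IsUnit (T + ((t : ℂ) * Complex.I) • (1 : H →L[ℂ] H)) := by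
  rcases ht.eq_or_lt with h | h
  · rw [← h]; simpa using hu
  · exact (add_smul_unit hT (by simpa using h)).1

theorem mul_norm_res_le {T : H →L[ℂ] H} (hT : Diss T) {t : ℝ} (ht : 0 ≤ t) :
    t * ‖res T t‖ ≤ 1 := by
  rcases ht.eq_or_lt with h | h
  · rw [← h]; simp
  · have := (add_smul_unit hT (ζ := (t : ℂ) * Complex.I) (by simpa using h)).2
    have e : ((t : ℂ) * Complex.I).im = t := by simp
    rw [e] at this
    calc t * ‖res T t‖ ≤ t * t⁻¹ := by unfold res; gcongr
      _ = 1 := mul_inv_cancel₀ h.ne'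

theorem norm_res_le {T : H →L[ℂ] H} (hT : Diss T) (hu : IsUnit T) {t : ℝ} (ht : 0 ≤ t) :
    ‖res T t‖ ≤ (2 * ‖Ring.inverse T‖ + 1) / (1 + t) := by
  have h1 := mul_norm_res_le hT ht
  have hu' := res_unit hT hu ht
  have e : res T t = Ring.inverse T - ((t : ℂ) * Complex.I) • (Ring.inverse T * res T t) := by
    have a1 : (T + ((t : ℂ) * Complex.I) • (1 : H →L[ℂ] H)) * res T t = 1 :=
      Ring.mul_inverse_cancel _ hu'
    have a2 := Ring.inverse_mul_cancel _ hu
    have a3 : Ring.inverse T * ((T + ((t : ℂ) * Complex.I) • (1 : H →L[ℂ] H)) * res T t)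
        = Ring.inverse T := by rw [a1, mul_one]
    rw [add_mul, mul_add, ← mul_assoc, a2, one_mul, smul_mul_assoc, one_mul, mul_smul_comm] at a3
    rw [← a3]
    rw [a3]
    exact eq_sub_of_add_eq a3
  have h2 : ‖res T t‖ ≤ 2 * ‖Ring.inverse T‖ := by
    calc ‖res T t‖ ≤ ‖Ring.inverse T‖ + ‖((t : ℂ) * Complex.I) • (Ring.inverse T * res T t)‖ := by
          conv_lhs => rw [e]
          exact norm_sub_le _ _
      _ ≤ ‖Ring.inverse T‖ + t * (‖Ring.inverse T‖ * ‖res T t‖) := by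
          rw [norm_smul, norm_mul, Complex.norm_I, mul_one, Complex.norm_real, Real.norm_eq_abs,
            abs_of_nonneg ht]
          gcongr
          exact norm_mul_le _ _
      _ = ‖Ring.inverse T‖ + ‖Ring.inverse T‖ * (t * ‖res T t‖) := by ring
      _ ≤ ‖Ring.inverse T‖ + ‖Ring.inverse T‖ * 1 := by gcongr
      _ = _ := by ring
  rw [le_div_iff₀ (by positivity)]
  nlinarith

theorem logIntegrand_eq (T : H →L[ℂ] H) (t : ℝ) :
    logIntegrand T t = res T t - (((1 : ℂ) + (t : ℂ) * Complex.I)⁻¹) • (1 : H →L[ℂ] H) := rfl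

theorem one_add_ne (t : ℝ) : (1 : ℂ) + (t : ℂ) * Complex.I ≠ 0 := by
  intro h
  have := congrArg Complex.re h
  simp at this

theorem inv_one_add_sq_le {t : ℝ} (ht : 0 ≤ t) (C : ℝ) (hC : 0 ≤ C) :
    C / (1 + t) * (1 / (1 + t)) ≤ C * (1 + t ^ 2)⁻¹ := by
  rw [div_mul_div_comm, mul_one, div_eq_mul_inv]
  gcongr
  nlinarith

theorem norm_logIntegrand_le {T : H →L[ℂ] H} (hT : Diss T) (hu : IsUnit T) {t : ℝ} (ht : 0 ≤ t) :
    ‖logIntegrand T t‖ ≤ ((2 * ‖Ring.inverse T‖ + 1) * (2 * ‖1 - T‖)) * (1 + t ^ 2)⁻¹ := by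
  have hu' := res_unit hT hu ht
  have e : logIntegrand T t = (((1 : ℂ) + (t : ℂ) * Complex.I)⁻¹) • (res T t * (1 - T)) := by
    have a1 : res T t * (T + ((t : ℂ) * Complex.I) • (1 : H →L[ℂ] H)) = 1 :=
      Ring.inverse_mul_cancel _ hu'
    have a2 : (1 : H →L[ℂ] H) - T = ((1 : ℂ) + (t : ℂ) * Complex.I) • (1 : H →L[ℂ] H)
        - (T + ((t : ℂ) * Complex.I) • (1 : H →L[ℂ] H)) := by
      rw [add_smul, one_smul]; abel
    rw [a2, mul_sub, a1, mul_smul_comm, mul_one, smul_sub, smul_smul, inv_mul_cancel₀ (one_add_ne t),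
      one_smul, logIntegrand_eq]
  have h1 : ‖((1 : ℂ) + (t : ℂ) * Complex.I)⁻¹‖ ≤ 2 / (1 + t) := by
    rw [norm_inv, inv_le_comm₀ (norm_pos_iff.mpr (one_add_ne t)) (by positivity), inv_div]
    have a := Complex.abs_re_le_norm ((1 : ℂ) + (t : ℂ) * Complex.I)
    have b := Complex.abs_im_le_norm ((1 : ℂ) + (t : ℂ) * Complex.I)
    simp [abs_of_nonneg ht] at a b
    linarith
  rw [e]
  calc _ ≤ ‖((1 : ℂ) + (t : ℂ) * Complex.I)⁻¹‖ * (‖res T t‖ * ‖1 - T‖) := by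
        rw [norm_smul]; gcongr; exact norm_mul_le _ _
    _ ≤ 2 / (1 + t) * ((2 * ‖Ring.inverse T‖ + 1) / (1 + t) * ‖1 - T‖) := by
        gcongr
        exact norm_res_le hT hu ht
    _ = ((2 * ‖Ring.inverse T‖ + 1) * (2 * ‖1 - T‖)) / (1 + t) * (1 / (1 + t)) := by
        field_simp
    _ ≤ _ := inv_one_add_sq_le ht _ (by positivity)

theorem continuousOn_res {T : H →L[ℂ] H} (hT : Diss T) (hu : IsUnit T) :
    ContinuousOn (res T) (Set.Ici 0) := by
  intro t ht
  apply ContinuousAt.continuousWithinAt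
  obtain ⟨u, hu'⟩ := res_unit hT hu (t := t) ht
  have h := NormedRing.inverse_continuousAt u
  rw [hu'] at h
  exact ContinuousAt.comp (f := fun t : ℝ => T + ((t : ℂ) * Complex.I) • (1 : H →L[ℂ] H)) h
    (by fun_prop)

theorem continuousOn_logIntegrand {T : H →L[ℂ] H} (hT : Diss T) (hu : IsUnit T) :
    ContinuousOn (logIntegrand T) (Set.Ici 0) := by
  have : ContinuousOn (fun t : ℝ => (((1 : ℂ) + (t : ℂ) * Complex.I)⁻¹) • (1 : H →L[ℂ] H))
      (Set.Ici 0) := by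
    apply Continuous.continuousOn
    exact (Continuous.inv₀ (by fun_prop) one_add_ne).smul continuous_const
  exact (continuousOn_res hT hu).sub this

theorem integrableOn_logIntegrand {T : H →L[ℂ] H} (hT : Diss T) (hu : IsUnit T) :
    IntegrableOn (logIntegrand T) (Set.Ioi 0) := by
  refine Integrable.mono' ((integrable_inv_one_add_sq.integrableOn).const_mul
    ((2 * ‖Ring.inverse T‖ + 1) * (2 * ‖1 - T‖))) ?_ ?_
  · exact ((continuousOn_logIntegrand hT hu).mono Set.Ioi_subset_Ici_self).aestronglyMeasurable
      measurableSet_Ioi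
  · filter_upwards [ae_restrict_mem measurableSet_Ioi] with t ht
    exact norm_logIntegrand_le hT hu (le_of_lt ht)

theorem opLog_eq {T : H →L[ℂ] H} (hT : Diss T) (hu : IsUnit T) :
    opLog T = (-Complex.I) • ∫ t in Set.Ioi (0:ℝ), logIntegrand T t := by
  unfold opLog
  apply Tendsto.limUnder_eq
  apply Tendsto.const_smul
  exact intervalIntegral_tendsto_integral_Ioi 0 (integrableOn_logIntegrand hT hu) tendsto_id

theorem opLog_differentiableOn {M : ℂ → H →L[ℂ] H} (hM : DifferentiableOn ℂ M {z : ℂ | 0 < z.im})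
    (hd : ∀ z : ℂ, 0 < z.im → Diss (M z)) (hu : ∀ z : ℂ, 0 < z.im → IsUnit (M z)) :
    DifferentiableOn ℂ (fun z => opLog (M z)) {z : ℂ | 0 < z.im} := by
  have hopen : IsOpen {z : ℂ | 0 < z.im} := isOpen_lt continuous_const Complex.continuous_im
  have h1 : DifferentiableOn ℂ (fun z => (-Complex.I) • ∫ t in Set.Ioi (0:ℝ), logIntegrand (M z) t)
      {z : ℂ | 0 < z.im} := by
    intro z hz
    apply DifferentiableAt.differentiableWithinAt
    apply DifferentiableAt.fun_const_smul
    have hnz : {z : ℂ | 0 < z.im} ∈ 𝓝 z := hopen.mem_nhds hz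
    have hMc : ContinuousAt M z := (hM.continuousOn).continuousAt hnz
    have hMd : ContinuousAt (deriv M) z := ((hM.deriv hopen).continuousOn).continuousAt hnz
    have hic : ContinuousAt (fun z => Ring.inverse (M z)) z := by
      obtain ⟨u, hu'⟩ := hu z hz
      have h := NormedRing.inverse_continuousAt u
      rw [hu'] at h
      exact ContinuousAt.comp h hMc
    set κ := ‖Ring.inverse (M z)‖ + 1 with hκ
    set K := ‖deriv M z‖ + 1 with hK
    have e1 : ∀ᶠ w in 𝓝 z, ‖Ring.inverse (M w)‖ < κ :=
      hic.norm.eventually (gt_mem_nhds (by simp [hκ]))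
    have e2 : ∀ᶠ w in 𝓝 z, ‖deriv M w‖ < K := hMd.norm.eventually (gt_mem_nhds (by simp [hK]))
    set s := {w : ℂ | 0 < w.im ∧ ‖Ring.inverse (M w)‖ < κ ∧ ‖deriv M w‖ < K} with hs
    have hsn : s ∈ 𝓝 z := by
      filter_upwards [hnz, e1, e2] with w a b c using ⟨a, b, c⟩
    have hres : ∀ w ∈ s, ∀ t : ℝ, 0 ≤ t → ‖res (M w) t‖ ≤ (2 * κ + 1) / (1 + t) := by
      intro w hw t ht
      refine (norm_res_le (hd w hw.1) (hu w hw.1) ht).trans ?_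
      have := hw.2.1.le
      gcongr
    refine ((hasDerivAt_integral_of_dominated_loc_of_deriv_le (μ := volume.restrict (Set.Ioi (0:ℝ)))
      (F := fun w t => logIntegrand (M w) t)
      (F' := fun w t => -(res (M w) t * deriv M w * res (M w) t))
      (bound := fun t => ((2 * κ + 1) ^ 2 * K) * (1 + t ^ 2)⁻¹) hsn ?_ ?_ ?_ ?_ ?_ ?_).2).differentiableAt
    · filter_upwards [hnz] with w hw
      exact (integrableOn_logIntegrand (hd w hw) (hu w hw)).aestronglyMeasurable
    · exact integrableOn_logIntegrand (hd z hz) (hu z hz)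
    · have hc := (continuousOn_res (hd z hz) (hu z hz)).mono Set.Ioi_subset_Ici_self
      exact (((hc.mul continuousOn_const).mul hc).neg).aestronglyMeasurable measurableSet_Ioi
    · filter_upwards [ae_restrict_mem measurableSet_Ioi] with t ht w hw
      have ht0 : 0 ≤ t := le_of_lt ht
      have a := hres w hw t ht0
      have κ0 : 0 ≤ κ := by positivity
      rw [norm_neg]
      calc _ ≤ ‖res (M w) t‖ * ‖deriv M w‖ * ‖res (M w) t‖ :=
            (norm_mul_le _ _).trans (by gcongr; exact norm_mul_le _ _)
        _ ≤ ((2 * κ + 1) / (1 + t)) * K * ((2 * κ + 1) / (1 + t)) := by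
            have := hw.2.2.le
            gcongr
        _ = ((2 * κ + 1) ^ 2 * K) / (1 + t) * (1 / (1 + t)) := by field_simp
        _ ≤ _ := inv_one_add_sq_le ht0 _ (by positivity)
    · exact (integrable_inv_one_add_sq.integrableOn).const_mul _
    · filter_upwards [ae_restrict_mem measurableSet_Ioi] with t ht w hw
      have ht0 : 0 ≤ t := le_of_lt ht
      obtain ⟨u, hu'⟩ := res_unit (hd w hw.1) (hu w hw.1) ht0
      have a1 : HasDerivAt (fun w => M w + ((t : ℂ) * Complex.I) • (1 : H →L[ℂ] H)) (deriv M w) w :=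
        ((hM.differentiableAt (hopen.mem_nhds hw.1)).hasDerivAt).add_const _
      have a2 := hasFDerivAt_ringInverse (𝕜 := ℂ) u
      have a4 : res (M w) t = ((u⁻¹ : (H →L[ℂ] H)ˣ) : H →L[ℂ] H) := by
        rw [res, ← hu', Ring.inverse_unit]
      rw [hu'] at a2
      have a3 := (a2.comp_hasDerivAt w a1).sub_const ((((1 : ℂ) + (t : ℂ) * Complex.I)⁻¹) • (1 : H →L[ℂ] H))
      rw [a4]
      convert a3 using 1
      · rfl
      · simp [ContinuousLinearMap.mulLeftRight_apply]
  refine h1.congr fun z hz => opLog_eq (hd z hz) (hu z hz)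

/-- The resolvent `(T - ζ)⁻¹`. -/
def rsv (T : H →L[ℂ] H) (ζ : ℂ) : H →L[ℂ] H := Ring.inverse (T + (-ζ) • (1 : H →L[ℂ] H))

theorem rsv_unit {T : H →L[ℂ] H} (hT : Diss T) {ζ : ℂ} (hζ : ζ.im < 0) :
    IsUnit (T + (-ζ) • (1 : H →L[ℂ] H)) :=
  (add_smul_unit hT (ζ := -ζ) (by simpa using hζ)).1

theorem rsv_im_nonpos {T : H →L[ℂ] H} (hT : Diss T) {ζ : ℂ} (hζ : ζ.im < 0) (f : H) :
    (⟪f, rsv T ζ f⟫_ℂ).im ≤ 0 := by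
  have hu := rsv_unit hT hζ
  set g := rsv T ζ f with hg
  have h1 : f = (T + (-ζ) • (1 : H →L[ℂ] H)) g := by
    have : (T + (-ζ) • (1 : H →L[ℂ] H)) * rsv T ζ = 1 := Ring.mul_inverse_cancel _ hu
    have := congrArg (fun A : H →L[ℂ] H => A f) this
    simpa [hg] using this.symm
  have h2 := im_inner_add_smul T (-ζ) g
  rw [← h1] at h2
  have h3 : (⟪f, g⟫_ℂ).im = - (⟪g, f⟫_ℂ).im := by
    rw [← inner_conj_symm g f, Complex.conj_im]; simp
  rw [h3, h2]
  have := hT g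
  have : 0 ≤ -ζ.im * ‖g‖ ^ 2 := mul_nonneg (by linarith) (by positivity)
  simp only [Complex.neg_im] at *
  linarith

theorem rsv_differentiableAt {T : H →L[ℂ] H} (hT : Diss T) {ζ : ℂ} (hζ : ζ.im < 0) :
    DifferentiableAt ℂ (rsv T) ζ := by
  obtain ⟨u, hu'⟩ := rsv_unit hT hζ
  have a2 := (hasFDerivAt_ringInverse (𝕜 := ℂ) u).differentiableAt
  rw [hu'] at a2
  exact DifferentiableAt.comp ζ (f := fun ζ : ℂ => T + (-ζ) • (1 : H →L[ℂ] H)) a2 (by fun_prop)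

theorem rsv_norm {T : H →L[ℂ] H} (hT : Diss T) {ζ : ℂ} (hζ : ζ.im < 0) {R : ℝ} (hR : 0 < R)
    (hR2 : 2 * ‖T‖ ≤ R) (h : R ≤ ‖ζ‖) : ‖rsv T ζ‖ ≤ 2 / R := by
  have hu := rsv_unit hT hζ
  have h1 : (T + (-ζ) • (1 : H →L[ℂ] H)) * rsv T ζ = 1 := Ring.mul_inverse_cancel _ hu
  have h2 : ζ • rsv T ζ = T * rsv T ζ - 1 := by
    rw [← h1, add_mul, smul_mul_assoc, one_mul]; simp
  have h3 : ‖ζ‖ * ‖rsv T ζ‖ ≤ ‖T‖ * ‖rsv T ζ‖ + 1 := by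
    rw [← norm_smul, h2]
    refine (norm_sub_le _ _).trans ?_
    gcongr
    · exact norm_mul_le _ _
    · exact ContinuousLinearMap.norm_id_le
  rw [le_div_iff₀ hR]
  have := norm_nonneg (rsv T ζ)
  nlinarith

theorem rsv_sub {T : H →L[ℂ] H} (hT : Diss T) {ζ c : ℂ} (hζ : ζ.im < 0) (hc : c - ζ ≠ 0) :
    rsv T ζ - (c - ζ)⁻¹ • (1 : H →L[ℂ] H) = (c - ζ)⁻¹ • (rsv T ζ * (c • 1 - T)) := by
  have hu := rsv_unit hT hζ
  have a1 : rsv T ζ * (T + (-ζ) • (1 : H →L[ℂ] H)) = 1 := Ring.inverse_mul_cancel _ hu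
  have a2 : c • (1 : H →L[ℂ] H) - T = (c - ζ) • (1 : H →L[ℂ] H) - (T + (-ζ) • (1 : H →L[ℂ] H)) := by
    rw [sub_smul, neg_smul]; abel
  rw [a2, mul_sub, a1, mul_smul_comm, mul_one, smul_sub, smul_smul, inv_mul_cancel₀ hc, one_smul]

theorem rsv_sub_norm {T : H →L[ℂ] H} (hT : Diss T) {ζ c : ℂ} (hζ : ζ.im < 0) {R : ℝ} (hR : 2 ≤ R)
    (hR2 : 2 * ‖T‖ ≤ R) (h : R ≤ ‖ζ‖) (hc : ‖c‖ ≤ 1) (f : H) :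
    ‖⟪f, (rsv T ζ - (c - ζ)⁻¹ • (1 : H →L[ℂ] H)) f⟫_ℂ‖ ≤ 4 * (1 + ‖T‖) * ‖f‖ ^ 2 / R ^ 2 := by
  have h0 : R / 2 ≤ ‖c - ζ‖ := by
    have := norm_sub_norm_le ζ c
    rw [norm_sub_rev] at this
    linarith
  have hR0 : 0 < R := by linarith
  have hne : c - ζ ≠ 0 := by rw [← norm_pos_iff]; linarith
  rw [rsv_sub hT hζ hne]
  have h1 : ‖(c - ζ)⁻¹ • (rsv T ζ * (c • 1 - T))‖ ≤ (2 / R) * ((2 / R) * (1 + ‖T‖)) := by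
    rw [norm_smul, norm_inv]
    gcongr
    · rw [inv_le_comm₀ (by linarith) (by positivity), inv_div]; exact h0
    · refine (norm_mul_le _ _).trans ?_
      gcongr
      · exact rsv_norm hT hζ hR0 hR2 h
      · refine (norm_sub_le _ _).trans ?_
        gcongr
        rw [norm_smul]
        calc ‖c‖ * ‖(1 : H →L[ℂ] H)‖ ≤ 1 * 1 := by
              gcongr; exact ContinuousLinearMap.norm_id_le
          _ = 1 := by ring
  calc _ ≤ ‖f‖ * ‖((c - ζ)⁻¹ • (rsv T ζ * (c • 1 - T))) f‖ := norm_inner_le_norm _ _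
    _ ≤ ‖f‖ * (((2 / R) * ((2 / R) * (1 + ‖T‖))) * ‖f‖) := by
        gcongr; exact (ContinuousLinearMap.le_opNorm _ _).trans (by gcongr)
    _ = _ := by field_simp; ring

theorem rect_bound {T : H →L[ℂ] H} (hT : Diss T) (f : H) {R : ℝ} (hR : 2 ≤ R)
    (hR2 : 2 * ‖T‖ ≤ R) {δ : ℝ} (hδ : 0 < δ) (hδ1 : δ ≤ 1) :
    -(∫ t in δ..R, (⟪f, res T t f⟫_ℂ).re) ≤ Real.pi / 2 * ‖f‖ ^ 2
      + 8 * (1 + ‖T‖) * ‖f‖ ^ 2 / R := by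
  have hR0 : 0 < R := by linarith
  set c : ℂ := ((1 - δ : ℝ) : ℂ) * Complex.I with hc
  have hcim : c.im = 1 - δ := by simp [hc]
  have hcre : c.re = 0 := by simp [hc]
  have hcn : ‖c‖ ≤ 1 := by
    rw [hc, norm_mul, Complex.norm_I, Complex.norm_real, Real.norm_eq_abs, abs_of_nonneg] <;> linarith
  set h : ℂ → ℂ := fun ζ => ⟪f, (rsv T ζ - (c - ζ)⁻¹ • (1 : H →L[ℂ] H)) f⟫_ℂ with hh
  have hcz : ∀ ζ : ℂ, ζ.im < 0 → c - ζ ≠ 0 := by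
    intro ζ hζ h0
    have := congrArg Complex.im h0
    simp [hcim] at this
    linarith
  have hdiff : ∀ ζ : ℂ, ζ.im < 0 → DifferentiableAt ℂ h ζ := by
    intro ζ hζ
    have e1 : DifferentiableAt ℂ (fun ζ => rsv T ζ - (c - ζ)⁻¹ • (1 : H →L[ℂ] H)) ζ := by
      refine (rsv_differentiableAt hT hζ).sub ?_
      refine DifferentiableAt.fun_smul ?_ (by fun_prop)
      exact DifferentiableAt.fun_inv (by fun_prop) (hcz ζ hζ)
    exact ((innerSL ℂ f).differentiableAt).comp ζ
      (((ContinuousLinearMap.apply ℂ H f).differentiableAt).comp ζ e1)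
  have hval : ∀ ζ : ℂ, h ζ = ⟪f, rsv T ζ f⟫_ℂ - (c - ζ)⁻¹ * (‖f‖ ^ 2 : ℝ) := by
    intro ζ
    simp only [hh, ContinuousLinearMap.sub_apply, ContinuousLinearMap.smul_apply,
      ContinuousLinearMap.one_apply, inner_sub_right, inner_smul_right, inner_self_eq_norm_sq_to_K]
    push_cast; rfl
  have key := Complex.integral_boundary_rect_eq_zero_of_differentiableOn h
    ((-R : ℝ) * Complex.I) (R + (-δ : ℝ) * Complex.I) (by
      intro ζ hζ
      apply (hdiff ζ ?_).differentiableWithinAt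
      have := hζ.2
      simp at this
      rw [Set.uIcc_of_le (by linarith)] at this
      linarith [this.2])
  have n1 : ‖∫ x in (0:ℝ)..R, h (x + (-R : ℝ) * Complex.I)‖ ≤
      (4 * (1 + ‖T‖) * ‖f‖ ^ 2 / R ^ 2) * |R - 0| := by
    apply intervalIntegral.norm_integral_le_of_norm_le_const
    intro x hx
    have him : ((x : ℂ) + (-R : ℝ) * Complex.I).im = -R := by simp
    apply rsv_sub_norm hT (by rw [him]; linarith) hR hR2 _ hcn
    have := Complex.abs_im_le_norm ((x : ℂ) + (-R : ℝ) * Complex.I)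
    rwa [him, abs_neg, abs_of_pos hR0] at this
  have n2 : ‖∫ y in (-R)..(-δ), h (R + y * Complex.I)‖ ≤
      (4 * (1 + ‖T‖) * ‖f‖ ^ 2 / R ^ 2) * |-δ - (-R)| := by
    apply intervalIntegral.norm_integral_le_of_norm_le_const
    intro y hy
    rw [Set.uIoc_of_le (by linarith)] at hy
    have him : ((R : ℂ) + y * Complex.I).im = y := by simp
    have hre : ((R : ℂ) + y * Complex.I).re = R := by simp
    apply rsv_sub_norm hT (by rw [him]; linarith [hy.2]) hR hR2 _ hcn
    have := Complex.abs_re_le_norm ((R : ℂ) + y * Complex.I)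
    rwa [hre, abs_of_pos hR0] at this
  have n3 : (∫ x in (0:ℝ)..R, h (x + (-δ : ℝ) * Complex.I)).im ≤ Real.pi / 2 * ‖f‖ ^ 2 := by
    have hcont : Continuous fun x : ℝ => h (x + (-δ : ℝ) * Complex.I) := by
      rw [continuous_iff_continuousAt]
      intro x
      exact ContinuousAt.comp (f := fun x : ℝ => (x : ℂ) + (-δ : ℝ) * Complex.I)
        (hdiff _ (by simpa using hδ)).continuousAt (by fun_prop)
    have e1 : (∫ x in (0:ℝ)..R, h (x + (-δ : ℝ) * Complex.I)).im =
        ∫ x in (0:ℝ)..R, (h (x + (-δ : ℝ) * Complex.I)).im :=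
      (Complex.imCLM.intervalIntegral_comp_comm (hcont.intervalIntegrable 0 R)).symm
    rw [e1]
    calc _ ≤ ∫ x in (0:ℝ)..R, (1 + x ^ 2)⁻¹ * ‖f‖ ^ 2 := by
          apply intervalIntegral.integral_mono_on hR0.le
          · exact (Complex.continuous_im.comp hcont).intervalIntegrable 0 R
          · apply Continuous.intervalIntegrable
            apply Continuous.mul _ continuous_const
            apply Continuous.inv₀ (by fun_prop)
            intro x; positivity
          · intro x hx
            rw [hval, Complex.sub_im, Complex.im_mul_ofReal]
            have a := rsv_im_nonpos hT (ζ := (x : ℂ) + (-δ : ℝ) * Complex.I) (by simpa using hδ) f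
            have b : (c - ((x : ℂ) + (-δ : ℝ) * Complex.I))⁻¹.im = -(1 + x ^ 2)⁻¹ := by
              rw [Complex.inv_im, Complex.normSq_apply]
              simp [hcim, hcre]
              field_simp
              ring
            rw [b]
            linarith
      _ = Real.arctan R * ‖f‖ ^ 2 := by
          rw [intervalIntegral.integral_mul_const, integral_inv_one_add_sq]; simp
      _ ≤ _ := by gcongr; exact (Real.arctan_lt_pi_div_two R).le
  have n4 : (∫ y in (-R)..(-δ), h (((0:ℝ) : ℂ) + y * Complex.I)).re =
      ∫ t in δ..R, (⟪f, res T t f⟫_ℂ).re := by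
    have hcont : ContinuousOn (fun x : ℝ => h (((0:ℝ) : ℂ) + x * Complex.I)) (Set.uIcc (-R) (-δ)) := by
      intro x hx
      rw [Set.uIcc_of_le (by linarith)] at hx
      apply ContinuousAt.continuousWithinAt
      exact ContinuousAt.comp (f := fun x : ℝ => ((0:ℝ) : ℂ) + x * Complex.I)
        (hdiff _ (by simp; linarith [hx.2])).continuousAt (by fun_prop)
    have e1 : (∫ y in (-R)..(-δ), h (((0:ℝ) : ℂ) + y * Complex.I)).re =
        ∫ y in (-R)..(-δ), (h (((0:ℝ) : ℂ) + y * Complex.I)).re :=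
      (Complex.reCLM.intervalIntegral_comp_comm hcont.intervalIntegrable).symm
    rw [e1, ← intervalIntegral.integral_comp_neg]
    apply intervalIntegral.integral_congr
    intro t ht
    simp only [hval, Complex.sub_re, Complex.re_mul_ofReal]
    have b : (c - (((0:ℝ) : ℂ) + ((-t : ℝ) : ℂ) * Complex.I))⁻¹.re = 0 := by
      rw [Complex.inv_re]; simp [hcre]
    rw [b, zero_mul, sub_zero, rsv, res]
    congr 6
    push_cast; ring
  simp only [Complex.add_re, Complex.add_im, Complex.re_ofReal_mul, Complex.im_ofReal_mul,
    Complex.I_re, Complex.I_im, mul_zero, mul_one, Complex.ofReal_re, Complex.ofReal_im, add_zero,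
    zero_add] at key
  have k2 := congrArg Complex.im key
  simp only [Complex.add_im, Complex.sub_im, smul_eq_mul, Complex.I_mul_im, Complex.zero_im] at k2
  rw [n4] at k2
  have m1 := (Complex.abs_im_le_norm _).trans n1
  have m2 := (Complex.abs_re_le_norm _).trans n2
  rw [sub_zero, abs_of_pos hR0] at m1
  have C0 : 0 ≤ 4 * (1 + ‖T‖) * ‖f‖ ^ 2 / R ^ 2 := by positivity
  have m2' : _ ≤ (4 * (1 + ‖T‖) * ‖f‖ ^ 2 / R ^ 2) * R := m2.trans (by
    gcongr
    rw [abs_of_nonneg (by linarith)]; linarith)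
  have m3 : (4 * (1 + ‖T‖) * ‖f‖ ^ 2 / R ^ 2) * R + (4 * (1 + ‖T‖) * ‖f‖ ^ 2 / R ^ 2) * R
    = 8 * (1 + ‖T‖) * ‖f‖ ^ 2 / R := by field_simp; ring
  have m4 := neg_abs_le (∫ x in (0:ℝ)..R, h (x + (-R : ℝ) * Complex.I)).im
  have m5 := neg_abs_le (∫ y in (-R)..(-δ), h (R + y * Complex.I)).re
  linarith

theorem res_bound_nonneg {T : H →L[ℂ] H} (hT : Diss T) (hu : IsUnit T) {t : ℝ} (ht : 0 ≤ t) :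
    ‖res T t‖ ≤ 2 * ‖Ring.inverse T‖ + 1 := by
  refine (norm_res_le hT hu ht).trans (div_le_self (by positivity) (by linarith))

theorem res_re_continuousOn {T : H →L[ℂ] H} (hT : Diss T) (hu : IsUnit T) (f : H) :
    ContinuousOn (fun t => (⟪f, res T t f⟫_ℂ).re) (Set.Ici 0) := by
  have h := continuousOn_res hT hu
  have h2 : ContinuousOn (fun t => res T t f) (Set.Ici 0) := h.clm_apply continuousOn_const
  exact Complex.continuous_re.comp_continuousOn (continuousOn_const.inner h2)

theorem rect_bound2 {T : H →L[ℂ] H} (hT : Diss T) (hu : IsUnit T) (f : H) :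
    ∃ C : ℝ, ∀ᶠ R : ℝ in atTop,
    -(∫ t in (0:ℝ)..R, (⟪f, res T t f⟫_ℂ).re) ≤ Real.pi / 2 * ‖f‖ ^ 2 + C * R⁻¹ := by
  refine ⟨8 * (1 + ‖T‖) * ‖f‖ ^ 2 + (2 * ‖Ring.inverse T‖ + 1) * ‖f‖ ^ 2, ?_⟩
  filter_upwards [eventually_ge_atTop 2, eventually_ge_atTop (2 * ‖T‖)] with R h1 h2
  have hR0 : 0 < R := by linarith
  have hinv : R⁻¹ ≤ 1 := inv_le_one_of_one_le₀ (by linarith)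
  have hi0 : 0 < R⁻¹ := by positivity
  have b := rect_bound hT f h1 h2 hi0 hinv
  have hc := res_re_continuousOn hT hu f
  have i1 : IntervalIntegrable (fun t => (⟪f, res T t f⟫_ℂ).re) volume 0 R⁻¹ := by
    apply (hc.mono ?_).intervalIntegrable
    rw [Set.uIcc_of_le hi0.le]; exact fun x hx => hx.1
  have i2 : IntervalIntegrable (fun t => (⟪f, res T t f⟫_ℂ).re) volume R⁻¹ R := by
    apply (hc.mono ?_).intervalIntegrable
    rw [Set.uIcc_of_le (by linarith)]; exact fun x hx => hi0.le.trans hx.1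
  rw [← intervalIntegral.integral_add_adjacent_intervals i1 i2]
  have n : ‖∫ t in (0:ℝ)..R⁻¹, (⟪f, res T t f⟫_ℂ).re‖ ≤
      ((2 * ‖Ring.inverse T‖ + 1) * ‖f‖ ^ 2) * |R⁻¹ - 0| := by
    apply intervalIntegral.norm_integral_le_of_norm_le_const
    intro t ht
    rw [Set.uIoc_of_le hi0.le] at ht
    calc _ ≤ ‖⟪f, res T t f⟫_ℂ‖ := Complex.abs_re_le_norm _
      _ ≤ ‖f‖ * ‖res T t f‖ := norm_inner_le_norm _ _
      _ ≤ ‖f‖ * ((2 * ‖Ring.inverse T‖ + 1) * ‖f‖) := by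
        gcongr
        refine (ContinuousLinearMap.le_opNorm _ _).trans ?_
        gcongr
        exact res_bound_nonneg hT hu ht.1.le
      _ = _ := by ring
  rw [sub_zero, abs_of_pos hi0, Real.norm_eq_abs] at n
  have := neg_abs_le (∫ t in (0:ℝ)..R⁻¹, (⟪f, res T t f⟫_ℂ).re)
  rw [div_eq_mul_inv (8 * (1 + ‖T‖) * ‖f‖ ^ 2)] at b
  linarith

theorem diss_neg_adjoint {T : H →L[ℂ] H} (hT : Diss T) : Diss (-(adjoint T)) := by
  intro f
  have := hT f
  rw [ContinuousLinearMap.neg_apply, inner_neg_right, ContinuousLinearMap.adjoint_inner_right,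
    ← inner_conj_symm (T f) f, Complex.neg_im, Complex.conj_im, neg_neg]
  exact this

theorem unit_neg_adjoint {T : H →L[ℂ] H} (hu : IsUnit T) : IsUnit (-(adjoint T)) := by
  have : IsUnit (star T) := hu.star
  rw [ContinuousLinearMap.star_eq_adjoint] at this
  exact this.neg

theorem res_neg_adjoint {T : H →L[ℂ] H} (hT : Diss T) (hu : IsUnit T) {t : ℝ} (ht : 0 ≤ t) :
    res (-(adjoint T)) t = -(adjoint (res T t)) := by
  have e : -(adjoint T) + ((t : ℂ) * Complex.I) • (1 : H →L[ℂ] H) =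
      -star (T + ((t : ℂ) * Complex.I) • (1 : H →L[ℂ] H)) := by
    rw [star_add, star_smul, star_one, ContinuousLinearMap.star_eq_adjoint]
    simp
    abel
  have hu' := res_unit hT hu ht
  have a1 : (T + ((t : ℂ) * Complex.I) • (1 : H →L[ℂ] H)) * res T t = 1 :=
      Ring.mul_inverse_cancel _ hu'
  have a2 : res T t * (T + ((t : ℂ) * Complex.I) • (1 : H →L[ℂ] H)) = 1 :=
      Ring.inverse_mul_cancel _ hu'
  unfold res at *
  rw [e]
  rw [← ContinuousLinearMap.star_eq_adjoint]
  have b1 := congrArg star a1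
  have b2 := congrArg star a2
  rw [star_mul, star_one] at b1 b2
  exact Ring.inverse_unit (⟨_, _, (by rw [neg_mul_neg, b2]), (by rw [neg_mul_neg, b1])⟩ : (H →L[ℂ] H)ˣ)

theorem im_opLog_eq {T : H →L[ℂ] H} (hT : Diss T) (hu : IsUnit T) (f : H) :
    Tendsto (fun R : ℝ => -(∫ t in (0:ℝ)..R, (⟪f, res T t f⟫_ℂ).re) + Real.arctan R * ‖f‖ ^ 2) atTop
      (𝓝 (⟪f, opLog T f⟫_ℂ).im) := by
  have h1 : Tendsto (fun R : ℝ => (-Complex.I) • ∫ t in (0:ℝ)..R, logIntegrand T t) atTop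
      (𝓝 (opLog T)) := by
    rw [opLog_eq hT hu]
    apply Tendsto.const_smul
    exact intervalIntegral_tendsto_integral_Ioi 0 (integrableOn_logIntegrand hT hu) tendsto_id
  have h2 : Continuous fun A : H →L[ℂ] H => (⟪f, A f⟫_ℂ).im := by fun_prop
  refine ((h2.tendsto _).comp h1).congr' ?_
  filter_upwards [eventually_ge_atTop 0] with R hR
  have ii : IntervalIntegrable (logIntegrand T) volume 0 R := by
    apply ((continuousOn_logIntegrand hT hu).mono ?_).intervalIntegrable
    rw [Set.uIcc_of_le hR]; exact fun x hx => hx.1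
  let Λ : (H →L[ℂ] H) →L[ℝ] ℝ := Complex.reCLM.comp
    (((innerSL ℂ f).comp (ContinuousLinearMap.apply ℂ H f)).restrictScalars ℝ)
  have hΛ : ∀ A, Λ A = (⟪f, A f⟫_ℂ).re := fun A => rfl
  have e1 : (⟪f, ((-Complex.I) • ∫ t in (0:ℝ)..R, logIntegrand T t) f⟫_ℂ).im
      = - Λ (∫ t in (0:ℝ)..R, logIntegrand T t) := by
    rw [hΛ, ContinuousLinearMap.smul_apply, inner_smul_right]
    simp
  simp only [Function.comp]
  rw [e1, ← Λ.intervalIntegral_comp_comm ii]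
  have e2 : ∀ t : ℝ, Λ (logIntegrand T t) = (⟪f, res T t f⟫_ℂ).re - (1 + t ^ 2)⁻¹ * ‖f‖ ^ 2 := by
    intro t
    rw [hΛ, logIntegrand_eq, ContinuousLinearMap.sub_apply, inner_sub_right, Complex.sub_re,
      ContinuousLinearMap.smul_apply, ContinuousLinearMap.one_apply, inner_smul_right,
      inner_self_eq_norm_sq_to_K]
    have : ((‖f‖ : ℂ) ^ 2) = ((‖f‖ ^ 2 : ℝ) : ℂ) := by push_cast; rfl
    erw [this]
    rw [Complex.re_mul_ofReal, Complex.inv_re, Complex.normSq_apply]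
    simp
    left
    ring
  simp only [e2]
  rw [intervalIntegral.integral_sub, intervalIntegral.integral_mul_const, integral_inv_one_add_sq]
  · simp; ring
  · apply ((res_re_continuousOn hT hu f).mono ?_).intervalIntegrable
    rw [Set.uIcc_of_le hR]; exact fun x hx => hx.1
  · apply Continuous.intervalIntegrable
    apply Continuous.mul _ continuous_const
    apply Continuous.inv₀ (by fun_prop)
    intro x; positivity

theorem im_opLog_bounds {T : H →L[ℂ] H} (hT : Diss T) (hu : IsUnit T) (f : H) :
    0 ≤ (⟪f, opLog T f⟫_ℂ).im ∧ (⟪f, opLog T f⟫_ℂ).im ≤ Real.pi * ‖f‖ ^ 2 := by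
  have h := im_opLog_eq hT hu f
  have at1 : Tendsto (fun R : ℝ => Real.arctan R * ‖f‖ ^ 2) atTop (𝓝 (Real.pi / 2 * ‖f‖ ^ 2)) :=
    (Real.tendsto_arctan_atTop.mono_right nhdsWithin_le_nhds).mul_const _
  constructor
  · obtain ⟨C, hC⟩ := rect_bound2 (diss_neg_adjoint hT) (unit_neg_adjoint hu) f
    have t2 : Tendsto (fun R : ℝ => -(Real.pi / 2 * ‖f‖ ^ 2 + C * R⁻¹) + Real.arctan R * ‖f‖ ^ 2) atTop
        (𝓝 (-(Real.pi / 2 * ‖f‖ ^ 2 + C * 0) + Real.pi / 2 * ‖f‖ ^ 2)) :=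
      ((tendsto_const_nhds.add (tendsto_inv_atTop_zero.const_mul C)).neg).add at1
    have e : -(Real.pi / 2 * ‖f‖ ^ 2 + C * 0) + Real.pi / 2 * ‖f‖ ^ 2 = 0 := by ring
    rw [e] at t2
    refine le_of_tendsto_of_tendsto t2 h ?_
    filter_upwards [hC, eventually_ge_atTop 0] with R hR hR0
    have : ∫ t in (0:ℝ)..R, (⟪f, res (-(adjoint T)) t f⟫_ℂ).re
        = -∫ t in (0:ℝ)..R, (⟪f, res T t f⟫_ℂ).re := by
      rw [← intervalIntegral.integral_neg]
      apply intervalIntegral.integral_congr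
      intro t ht
      rw [Set.uIcc_of_le hR0] at ht
      simp only
      rw [res_neg_adjoint hT hu ht.1, ContinuousLinearMap.neg_apply, inner_neg_right,
        ContinuousLinearMap.adjoint_inner_right, ← inner_conj_symm (res T t f) f, Complex.neg_re, Complex.conj_re]
    rw [this] at hR
    linarith
  · obtain ⟨C, hC⟩ := rect_bound2 hT hu f
    have t2 : Tendsto (fun R : ℝ => (Real.pi / 2 * ‖f‖ ^ 2 + C * R⁻¹) + Real.arctan R * ‖f‖ ^ 2) atTop
        (𝓝 ((Real.pi / 2 * ‖f‖ ^ 2 + C * 0) + Real.pi / 2 * ‖f‖ ^ 2)) :=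
      ((tendsto_const_nhds.add (tendsto_inv_atTop_zero.const_mul C))).add at1
    have e : (Real.pi / 2 * ‖f‖ ^ 2 + C * 0) + Real.pi / 2 * ‖f‖ ^ 2 = Real.pi * ‖f‖ ^ 2 := by ring
    rw [e] at t2
    refine le_of_tendsto_of_tendsto h t2 ?_
    filter_upwards [hC] with R hR
    linarith

theorem schwarz_avg {G G' : ℂ → ℂ} (hG : ∀ ζ ∈ Metric.closedBall (0:ℂ) 1, DifferentiableAt ℂ G ζ)
    (hG' : ∀ ζ ∈ Metric.closedBall (0:ℂ) 1, DifferentiableAt ℂ G' ζ) {ω : ℂ} (hω : ‖ω‖ < 1) :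
    Real.circleAverage (fun ζ => ((ζ + ω) / (ζ - ω)) * (G ζ - (starRingEnd ℂ) (G' ζ))) 0 1
      = 2 * G ω - G 0 - (starRingEnd ℂ) (G' 0) := by
  have hcl : ∀ {F : ℂ → ℂ}, (∀ ζ ∈ Metric.closedBall (0:ℂ) 1, DifferentiableAt ℂ F ζ) →
      DiffContOnCl ℂ F (Metric.ball 0 |1|) := by
    intro F hF
    apply DifferentiableOn.diffContOnCl
    rw [abs_one, closure_ball _ one_ne_zero]
    exact fun ζ hζ => (hF ζ hζ).differentiableWithinAt
  have hω' : ω ∈ Metric.ball (0:ℂ) |1| := by simpa using hω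
  have a1 := (hcl hG).circleAverage_smul_div hω'
  have a2 := (hcl hG).circleAverage
  set F : ℂ → ℂ := fun ζ => G' ζ * ((1 + (starRingEnd ℂ) ω * ζ) / (1 - (starRingEnd ℂ) ω * ζ)) with hF
  have hne : ∀ ζ ∈ Metric.closedBall (0:ℂ) 1, 1 - (starRingEnd ℂ) ω * ζ ≠ 0 := by
    intro ζ hζ h0
    have hz1 : ‖ζ‖ ≤ 1 := by simpa using hζ
    have : ‖(starRingEnd ℂ) ω * ζ‖ < 1 := by
      rw [norm_mul, RCLike.norm_conj]
      nlinarith [norm_nonneg ω, norm_nonneg ζ]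
    rw [← sub_eq_zero.mp h0] at this
    simp at this
  have hFd : ∀ ζ ∈ Metric.closedBall (0:ℂ) 1, DifferentiableAt ℂ F ζ := by
    intro ζ hζ
    exact (hG' ζ hζ).fun_mul (DifferentiableAt.fun_div (by fun_prop) (by fun_prop) (hne ζ hζ))
  have a3 := (hcl hFd).circleAverage
  have cont : ∀ {F : ℂ → ℂ}, (∀ ζ ∈ Metric.closedBall (0:ℂ) 1, DifferentiableAt ℂ F ζ) →
      ContinuousOn F (Metric.sphere 0 |1|) := by
    intro F hF ζ hζ
    exact (hF ζ (by rw [abs_one] at hζ; exact Metric.sphere_subset_closedBall hζ)).continuousAt.continuousWithinAt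
  have cF : CircleIntegrable F 0 1 := (cont hFd).circleIntegrable'
  have cG : CircleIntegrable G 0 1 := (cont hG).circleIntegrable'
  have hne2 : ∀ ζ ∈ Metric.sphere (0:ℂ) |1|, ζ - ω ≠ 0 := by
    intro ζ hζ h0
    rw [sub_eq_zero.mp h0] at hζ
    simp at hζ
    linarith
  have cG2 : CircleIntegrable (fun z => ((z - 0) / (z - ω)) • G z) 0 1 := by
    apply ContinuousOn.circleIntegrable'
    exact (ContinuousOn.div (by fun_prop) (by fun_prop) hne2).smul (cont hG)
  have a4 : Real.circleAverage (fun ζ => (starRingEnd ℂ) (F ζ)) 0 1 = (starRingEnd ℂ) (F 0) := by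
    rw [← a3]
    exact (Complex.conjCLE.toContinuousLinearMap).circleAverage_comp_comm cF
  have cF2 : CircleIntegrable (fun ζ => (starRingEnd ℂ) (F ζ)) 0 1 := by
    apply ContinuousOn.circleIntegrable'
    exact Complex.continuous_conj.comp_continuousOn (cont hFd)
  have e : Set.EqOn (fun ζ => ((ζ + ω) / (ζ - ω)) * (G ζ - (starRingEnd ℂ) (G' ζ)))
      ((((2:ℂ) • fun z => ((z - 0) / (z - ω)) • G z) - G) - fun ζ => (starRingEnd ℂ) (F ζ))
      (Metric.sphere 0 |1|) := by
    intro ζ hζ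
    have h2 := hne2 ζ hζ
    have hn : ‖ζ‖ = 1 := by simpa using hζ
    have hz0 : ζ ≠ 0 := by rw [← norm_pos_iff, hn]; exact one_pos
    have hconj : (starRingEnd ℂ) ζ = ζ⁻¹ := by
      rw [Complex.inv_def, Complex.normSq_eq_norm_sq, hn]; simp
    simp only [hF, Pi.sub_apply, Pi.smul_apply, smul_eq_mul, map_mul, map_div₀, map_add, map_sub,
      map_one, Complex.conj_conj, hconj, sub_zero]
    have : (1 + ω * ζ⁻¹) / (1 - ω * ζ⁻¹) = (ζ + ω) / (ζ - ω) := by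
      have h3 : 1 - ω * ζ⁻¹ ≠ 0 := by
        intro h; apply h2
        field_simp at h
        rw [mul_zero] at h
        exact h
      rw [div_eq_div_iff h3 h2]; field_simp
    rw [this]
    field_simp
    ring
  rw [Real.circleAverage_congr_sphere e, Real.circleAverage_sub ?_ cF2, Real.circleAverage_sub ?_ cG,
    Real.circleAverage_smul, a1, a2, a4]
  · simp [hF]
  · exact cG2.const_smul
  · exact cG2.const_smul.sub cG

/-- Cayley transform of the real line. -/
def cay (l : ℝ) : ℂ := ((l : ℂ) - Complex.I) / ((l : ℂ) + Complex.I)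

theorem real_add_I_ne (l : ℝ) : (l : ℂ) + Complex.I ≠ 0 := by
  intro h
  have := congrArg Complex.im h
  simp at this

theorem cay_eq (l : ℝ) : cay l = circleMap 0 1 (2 * Real.arctan l + Real.pi) := by
  have h1 : Complex.exp ((Real.arctan l : ℂ) * Complex.I) ^ 2 = (1 + l * Complex.I) ^ 2 / (1 + l ^ 2) := by
    rw [Complex.exp_mul_I, ← Complex.ofReal_cos, ← Complex.ofReal_sin, Real.cos_arctan, Real.sin_arctan]
    have hs : (Real.sqrt (1 + l ^ 2)) ≠ 0 := by positivity
    have hs2 : ((Real.sqrt (1 + l ^ 2) : ℝ) : ℂ) ≠ 0 := by exact_mod_cast hs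
    have hs3 : ((Real.sqrt (1 + l ^ 2) : ℝ) : ℂ) ^ 2 = 1 + (l:ℂ) ^ 2 := by
      rw [← Complex.ofReal_pow, Real.sq_sqrt (by positivity)]; push_cast; ring
    rw [← hs3]
    push_cast
    field_simp
  rw [circleMap]
  simp only [Complex.ofReal_one, one_mul, zero_add]
  have : ((2 * Real.arctan l + Real.pi : ℝ) : ℂ) * Complex.I =
    ((Real.arctan l : ℂ) * Complex.I + (Real.arctan l : ℂ) * Complex.I) + Real.pi * Complex.I := by
    push_cast; ring
  rw [this, Complex.exp_add, Complex.exp_add, Complex.exp_pi_mul_I, ← sq, h1, cay]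
  have h3 : (1 + (l:ℂ) ^ 2) = (l + Complex.I) * (l - Complex.I) := by
    ring_nf; simp; ring
  have h4 : (l : ℂ) - Complex.I ≠ 0 := by
    intro h
    have := congrArg Complex.im h
    simp at this
  have h5 := real_add_I_ne l
  have h6 : (1 + l * Complex.I) ^ 2 = -(l - Complex.I) ^ 2 := by
    ring_nf; simp; ring
  rw [h3, h6]
  field_simp

theorem integral_cay (Φ : ℂ → ℂ) :
    ∫ l : ℝ, (((1 + l ^ 2)⁻¹ : ℝ) : ℂ) * Φ (cay l) = Real.pi * Real.circleAverage Φ 0 1 := by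
  have h := integral_image_eq_integral_abs_deriv_smul (s := Set.univ) (f := Real.arctan)
    (f' := fun x => (1 + x ^ 2)⁻¹) MeasurableSet.univ
    (fun x _ => (Real.hasDerivAt_arctan' x).hasDerivWithinAt) Real.arctan_injective.injOn
    (fun a => Φ (circleMap 0 1 (2 * a + Real.pi)))
  rw [Set.image_univ, Real.range_arctan, setIntegral_univ] at h
  have h2 : (∫ l : ℝ, (((1 + l ^ 2)⁻¹ : ℝ) : ℂ) * Φ (cay l)) =
      ∫ x : ℝ, |(1 + x ^ 2)⁻¹| • Φ (circleMap 0 1 (2 * Real.arctan x + Real.pi)) := by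
    congr 1
    ext l
    rw [cay_eq, abs_of_nonneg (by positivity), Complex.real_smul]
  rw [h2, ← h, ← integral_Ioc_eq_integral_Ioo, ← intervalIntegral.integral_of_le (by linarith [Real.pi_pos]),
    intervalIntegral.integral_comp_mul_add (fun θ => Φ (circleMap 0 1 θ)) two_ne_zero,
    Real.circleAverage_def]
  have e1 : 2 * -(Real.pi / 2) + Real.pi = 0 := by ring
  have e2 : 2 * (Real.pi / 2) + Real.pi = 2 * Real.pi := by ring
  rw [e1, e2, Complex.real_smul, Complex.real_smul]
  have : (Real.pi : ℂ) ≠ 0 := by exact_mod_cast Real.pi_pos.ne'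
  push_cast
  field_simp

/-- Inverse Cayley transform from the disc to the upper half-plane. -/
def phi (ω : ℂ) : ℂ := Complex.I * ((1 + ω) / (1 - ω))

theorem one_sub_ne {ω : ℂ} (h : ‖ω‖ < 1) : 1 - ω ≠ 0 := by
  intro h0
  rw [← sub_eq_zero.mp h0] at h
  simp at h

theorem phi_im {ω : ℂ} (h : ‖ω‖ < 1) : 0 < (phi ω).im := by
  rw [phi, Complex.I_mul_im, Complex.div_re, ← add_div]
  apply div_pos
  · have h1 : ‖ω‖ ^ 2 < 1 := by nlinarith [norm_nonneg ω]
    rw [← Complex.normSq_eq_norm_sq, Complex.normSq_apply] at h1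
    simp
    nlinarith
  · exact Complex.normSq_pos.mpr (one_sub_ne h)

theorem phi_diff {ω : ℂ} (h : ‖ω‖ < 1) : DifferentiableAt ℂ phi ω :=
  DifferentiableAt.const_mul (DifferentiableAt.fun_div (by fun_prop) (by fun_prop) (one_sub_ne h)) _

/-- Cayley transform of the upper half-plane. -/
def cayC (z : ℂ) : ℂ := (z - Complex.I) / (z + Complex.I)

theorem add_I_ne {z : ℂ} (hz : 0 < z.im) : z + Complex.I ≠ 0 := by
  intro h
  have := congrArg Complex.im h
  simp at this
  linarith

theorem cayC_norm {z : ℂ} (hz : 0 < z.im) : ‖cayC z‖ < 1 := by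
  rw [cayC, norm_div, div_lt_one (norm_pos_iff.mpr (add_I_ne hz))]
  apply lt_of_pow_lt_pow_left₀ 2 (norm_nonneg _)
  rw [← Complex.normSq_eq_norm_sq, ← Complex.normSq_eq_norm_sq, Complex.normSq_apply,
    Complex.normSq_apply]
  simp
  nlinarith

theorem phi_cayC {z : ℂ} (hz : 0 < z.im) : phi (cayC z) = z := by
  have h1 := add_I_ne hz
  rw [phi, cayC]
  have e1 : 1 + (z - Complex.I) / (z + Complex.I) = (2 * z) / (z + Complex.I) := by field_simp; ring
  have e2 : 1 - (z - Complex.I) / (z + Complex.I) = (2 * Complex.I) / (z + Complex.I) := by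
    field_simp; ring
  rw [e1, e2, div_div_div_cancel_right₀ h1]
  field_simp

theorem cay_norm (l : ℝ) : ‖cay l‖ = 1 := by
  rw [cay_eq]
  simpa using norm_circleMap_zero 1 (2 * Real.arctan l + Real.pi)

theorem kernel_eq {z : ℂ} (hz : 0 < z.im) (l : ℝ) :
    (1 + l * z) / (l - z) = Complex.I * ((cay l + cayC z) / (cay l - cayC z)) := by
  have h1 := add_I_ne hz
  have h2 := real_add_I_ne l
  have h3 : (l : ℂ) - z ≠ 0 := by
    intro h
    have := congrArg Complex.im h
    simp at this
    linarith
  have e1 : cay l + cayC z = (2 * (l * z + 1)) / ((l + Complex.I) * (z + Complex.I)) := by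
    rw [cay, cayC]; field_simp; ring_nf; simp; ring
  have e2 : cay l - cayC z = (2 * Complex.I * (l - z)) / ((l + Complex.I) * (z + Complex.I)) := by
    rw [cay, cayC]; field_simp; ring_nf
  rw [e1, e2, div_div_div_cancel_right₀ (mul_ne_zero h2 h1)]
  field_simp
  ring

theorem kernel_eq2 {z : ℂ} (hz : 0 < z.im) (l : ℝ) :
    ((l : ℂ) - z)⁻¹ - (l : ℂ) * ((1 : ℂ) + (l : ℂ) ^ 2)⁻¹ =
      (((1 + l ^ 2)⁻¹ : ℝ) : ℂ) * ((1 + l * z) / (l - z)) := by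
  have h3 : (l : ℂ) - z ≠ 0 := by
    intro h
    have := congrArg Complex.im h
    simp at this
    linarith
  have h4 : (1 : ℂ) + (l : ℂ) ^ 2 ≠ 0 := by
    have : (1 + l ^ 2 : ℝ) ≠ 0 := by positivity
    exact_mod_cast this
  push_cast
  field_simp
  ring

/-- Approximants to the boundary values. -/
def apx (L : ℂ → H →L[ℂ] H) (r : ℝ) (l : ℝ) : H →L[ℂ] H :=
  ((Real.pi⁻¹ : ℝ) : ℂ) • imPart (L (phi (r * cay l)))

theorem schwarz_op {L : ℂ → H →L[ℂ] H} (hL : DifferentiableOn ℂ L {z : ℂ | 0 < z.im}) {r : ℝ}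
    (hr0 : 0 ≤ r) (hr1 : r < 1) {z : ℂ} (hz : 0 < z.im) (f g : H) :
    ∫ l : ℝ, (((1 + l ^ 2)⁻¹ : ℝ) : ℂ) * ((1 + l * z) / (l - z) * ⟪f, apx L r l g⟫_ℂ) =
      ⟪f, L (phi (r * cayC z)) g⟫_ℂ -
        ⟪f, ((2 : ℂ)⁻¹ • (L Complex.I + adjoint (L Complex.I))) g⟫_ℂ := by
  have hopen : IsOpen {z : ℂ | 0 < z.im} := isOpen_lt continuous_const Complex.continuous_im
  have hrn : ∀ ζ : ℂ, ‖ζ‖ ≤ 1 → ‖(r : ℂ) * ζ‖ < 1 := by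
    intro ζ hζ
    rw [norm_mul, Complex.norm_real, Real.norm_eq_abs, abs_of_nonneg hr0]
    nlinarith [norm_nonneg ζ]
  have hLd : ∀ ζ ∈ Metric.closedBall (0:ℂ) 1, DifferentiableAt ℂ (fun ζ => L (phi (r * ζ))) ζ := by
    intro ζ hζ
    have h1 := hrn ζ (by simpa using hζ)
    have d1 := (hL _ (phi_im h1)).differentiableAt (hopen.mem_nhds (phi_im h1))
    have d2 : DifferentiableAt ℂ (fun ζ => phi (r * ζ)) ζ :=
      DifferentiableAt.comp ζ (f := fun ζ => (r : ℂ) * ζ) (phi_diff h1) (by fun_prop)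
    exact d1.comp ζ d2
  have hGd : ∀ f g : H, ∀ ζ ∈ Metric.closedBall (0:ℂ) 1,
      DifferentiableAt ℂ (fun ζ => ⟪f, L (phi (r * ζ)) g⟫_ℂ) ζ := by
    intro f g ζ hζ
    exact ((innerSL ℂ f).differentiableAt).comp ζ
      (((ContinuousLinearMap.apply ℂ H g).differentiableAt).comp ζ (hLd ζ hζ))
  have key := schwarz_avg (hGd f g) (hGd g f) (cayC_norm hz)
  have h0 : phi (r * 0) = Complex.I := by simp [phi]
  simp only [h0] at key
  obtain ⟨Φ, hΦ⟩ : ∃ Φ : ℂ → ℂ, Φ = (fun ζ : ℂ => ((ζ + cayC z) / (ζ - cayC z)) *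
      (⟪f, L (phi (r * ζ)) g⟫_ℂ - (starRingEnd ℂ) ⟪g, L (phi (r * ζ)) f⟫_ℂ)) := ⟨_, rfl⟩
  rw [← hΦ] at key
  have e1 : ∀ l : ℝ, (((1 + l ^ 2)⁻¹ : ℝ) : ℂ) * ((1 + l * z) / (l - z) * ⟪f, apx L r l g⟫_ℂ) =
      (2 * Real.pi : ℂ)⁻¹ * ((((1 + l ^ 2)⁻¹ : ℝ) : ℂ) *
        Φ (cay l)) := by
    intro l
    rw [hΦ]
    have : ⟪f, apx L r l g⟫_ℂ = ((Real.pi⁻¹ : ℝ) : ℂ) * ((2 * Complex.I)⁻¹ *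
        (⟪f, L (phi (r * cay l)) g⟫_ℂ - (starRingEnd ℂ) ⟪g, L (phi (r * cay l)) f⟫_ℂ)) := by
      rw [apx, imPart]
      simp only [ContinuousLinearMap.smul_apply, ContinuousLinearMap.sub_apply, inner_smul_right,
        inner_sub_right, ContinuousLinearMap.adjoint_inner_right]
      rw [inner_conj_symm]
    rw [this, kernel_eq hz]
    push_cast
    have hI := Complex.I_ne_zero
    have hp : (Real.pi : ℂ) ≠ 0 := by exact_mod_cast Real.pi_pos.ne'
    generalize ((cay l + cayC z) / (cay l - cayC z)) = A
    generalize (⟪f, L (phi (r * cay l)) g⟫_ℂ - (starRingEnd ℂ) ⟪g, L (phi (r * cay l)) f⟫_ℂ) = B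
    rw [mul_inv, mul_inv]
    field_simp
  rw [integral_congr_ae (Filter.Eventually.of_forall e1), integral_const_mul, integral_cay, key]
  have hp : (Real.pi : ℂ) ≠ 0 := by exact_mod_cast Real.pi_pos.ne'
  simp only [ContinuousLinearMap.smul_apply, ContinuousLinearMap.add_apply, inner_smul_right,
        inner_add_right, ContinuousLinearMap.adjoint_inner_right]
  rw [inner_conj_symm]
  field_simp
  ring

theorem cay_continuous : Continuous cay := by
  unfold cay
  exact Continuous.div (by fun_prop) (by fun_prop) real_add_I_ne

theorem apx_continuous {L : ℂ → H →L[ℂ] H} (hL : DifferentiableOn ℂ L {z : ℂ | 0 < z.im}) {r : ℝ}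
    (hr0 : 0 ≤ r) (hr1 : r < 1) (f g : H) : Continuous fun l => ⟪f, apx L r l g⟫_ℂ := by
  have hopen : IsOpen {z : ℂ | 0 < z.im} := isOpen_lt continuous_const Complex.continuous_im
  have hrn : ∀ l : ℝ, ‖(r : ℂ) * cay l‖ < 1 := by
    intro l
    rw [norm_mul, Complex.norm_real, Real.norm_eq_abs, abs_of_nonneg hr0, cay_norm]
    linarith
  have h1 : Continuous fun l => L (phi (r * cay l)) := by
    rw [continuous_iff_continuousAt]
    intro l
    have d1 := ((hL _ (phi_im (hrn l))).differentiableAt (hopen.mem_nhds (phi_im (hrn l)))).continuousAt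
    have d2 : ContinuousAt (fun l : ℝ => phi (r * cay l)) l :=
      ContinuousAt.comp (f := fun l : ℝ => (r : ℂ) * cay l) (phi_diff (hrn l)).continuousAt
        (continuous_const.mul cay_continuous).continuousAt
    exact ContinuousAt.comp (f := fun l : ℝ => phi (r * cay l)) d1 d2
  have h2 : Continuous fun T : H →L[ℂ] H => ⟪f, imPart T g⟫_ℂ := by
    simp only [inner_imPart]
    fun_prop
  have := h2.comp h1
  have e : (fun l => ⟪f, apx L r l g⟫_ℂ) =
      fun l => ((Real.pi⁻¹ : ℝ) : ℂ) * ⟪f, imPart (L (phi (r * cay l))) g⟫_ℂ := by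
    ext l
    rw [apx, ContinuousLinearMap.smul_apply, inner_smul_right]
  rw [e]
  exact continuous_const.mul this

theorem apx_form {L : ℂ → H →L[ℂ] H}
    (hb : ∀ z : ℂ, 0 < z.im → ∀ f, 0 ≤ (⟪f, L z f⟫_ℂ).im ∧ (⟪f, L z f⟫_ℂ).im ≤ Real.pi * ‖f‖ ^ 2)
    {r : ℝ} (hr0 : 0 ≤ r) (hr1 : r < 1) (l : ℝ) (f : H) :
    ∃ s : ℝ, 0 ≤ s ∧ s ≤ ‖f‖ ^ 2 ∧ ⟪f, apx L r l f⟫_ℂ = s := by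
  have hrn : ‖(r : ℂ) * cay l‖ < 1 := by
    rw [norm_mul, Complex.norm_real, Real.norm_eq_abs, abs_of_nonneg hr0, cay_norm]
    linarith
  obtain ⟨h1, h2⟩ := hb _ (phi_im hrn) f
  refine ⟨Real.pi⁻¹ * (⟪f, L (phi (r * cay l)) f⟫_ℂ).im, by positivity, ?_, ?_⟩
  · rw [inv_mul_le_iff₀ Real.pi_pos]; exact h2
  · rw [apx, ContinuousLinearMap.smul_apply, inner_smul_right, inner_imPart_self]
    push_cast; rfl

theorem kernel_bounded {z : ℂ} (hz : 0 < z.im) :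
    ∃ C : ℝ, ∀ l : ℝ, ‖(1 + l * z) / (l - z)‖ ≤ C := by
  refine ⟨‖z‖ + ‖1 + z ^ 2‖ / z.im, fun l => ?_⟩
  have h3 : (l : ℂ) - z ≠ 0 := by
    intro h
    have := congrArg Complex.im h
    simp at this
    linarith
  have e : (1 + l * z) / (l - z) = z + (1 + z ^ 2) / (l - z) := by field_simp; ring
  rw [e]
  refine (norm_add_le _ _).trans ?_
  rw [norm_div]
  gcongr
  have := Complex.abs_im_le_norm ((l : ℂ) - z)
  simpa [abs_of_pos hz] using this

theorem kernel_continuous {z : ℂ} (hz : 0 < z.im) :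
    Continuous fun l : ℝ => (1 + l * z) / (l - z) := by
  refine Continuous.div (by fun_prop) (by fun_prop) ?_
  intro l h
  have := congrArg Complex.im h
  simp at this
  linarith


structure Good (β : H → H → ℂ) : Prop where
  add_right : ∀ f g k, β f (g + k) = β f g + β f k
  smul_right : ∀ (c : ℂ) f g, β f (c • g) = c * β f g
  herm : ∀ f g, β g f = (starRingEnd ℂ) (β f g)
  bound : ∀ f g, ‖β f g‖ ≤ ‖f‖ * ‖g‖
  pos : ∀ f, 0 ≤ (β f f).re

theorem bdd_ultra (U : Ultrafilter ℕ) (u : ℕ → ℂ) (C : ℝ) (hC : ∀ n, ‖u n‖ ≤ C) :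
    ∃ a, Tendsto u U (𝓝 a) := by
  obtain ⟨a, -, ha⟩ := (isCompact_closedBall (0:ℂ) C).ultrafilter_le_nhds (U.map u) (by
    rw [le_principal_iff]
    change Metric.closedBall (0:ℂ) C ∈ Filter.map u (U : Filter ℕ)
    rw [Filter.mem_map]
    exact Filter.univ_mem' (fun n => by simpa using hC n))
  exact ⟨a, ha⟩

theorem Good.ultra (U : Ultrafilter ℕ) (b : ℕ → H → H → ℂ) (hb : ∀ n, Good (b n)) :
    ∃ β : H → H → ℂ, Good β ∧ ∀ f g, Tendsto (fun n => b n f g) U (𝓝 (β f g)) := by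
  have h1 : ∀ f g, ∃ a, Tendsto (fun n => b n f g) U (𝓝 a) := fun f g =>
    bdd_ultra U _ _ (fun n => (hb n).bound f g)
  choose β hβ using h1
  refine ⟨β, ⟨?_, ?_, ?_, ?_, ?_⟩, hβ⟩
  · intro f g k
    refine tendsto_nhds_unique (hβ f (g+k)) ?_
    simp_rw [(hb _).add_right]
    exact (hβ f g).add (hβ f k)
  · intro c f g
    refine tendsto_nhds_unique (hβ f (c • g)) ?_
    simp_rw [(hb _).smul_right]
    exact (hβ f g).const_mul c
  · intro f g
    refine tendsto_nhds_unique (hβ g f) ?_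
    have : (fun n => b n g f) = fun n => (starRingEnd ℂ) (b n f g) := by
      funext n; exact (hb n).herm f g
    rw [this]
    exact (Complex.continuous_conj.tendsto _).comp (hβ f g)
  · intro f g
    exact le_of_tendsto (hβ f g).norm (Eventually.of_forall fun n => (hb n).bound f g)
  · intro f
    exact ge_of_tendsto ((Complex.continuous_re.tendsto _).comp (hβ f f))
      (Eventually.of_forall fun n => (hb n).pos f)

theorem Good.im_self {β : H → H → ℂ} (h : Good β) (f : H) : β f f = ((β f f).re : ℂ) := by
  have := h.herm f f
  exact (Complex.conj_eq_iff_re.mp this.symm).symm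

theorem Good.op {β : H → H → ℂ} (h : Good β) : ∃ T : H →L[ℂ] H, T.IsPositive ∧
    (1 - T).IsPositive ∧ ∀ f g, ⟪f, T g⟫_ℂ = β f g := by
  have hal : ∀ f k g, β (f + k) g = β f g + β k g := by
    intro f k g
    rw [h.herm g, h.add_right, map_add, ← h.herm, ← h.herm]
  have hsl : ∀ (c : ℂ) f g, β (c • f) g = (starRingEnd ℂ) c * β f g := by
    intro c f g
    rw [h.herm g, h.smul_right, map_mul, ← h.herm]
  let B0 : H →ₗ⋆[ℂ] H →ₗ[ℂ] ℂ := LinearMap.mk₂'ₛₗ (starRingEnd ℂ) (RingHom.id ℂ) β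
    hal (by intro c f g; simpa using hsl c f g) h.add_right
    (by intro c f g; simpa using h.smul_right c f g)
  let B : H →L⋆[ℂ] H →L[ℂ] ℂ := B0.mkContinuous₂ 1 (by
    intro f g; rw [one_mul]; exact h.bound f g)
  let S := InnerProductSpace.continuousLinearMapOfBilin B
  have hS : ∀ f g, ⟪S f, g⟫_ℂ = β f g := fun f g =>
    InnerProductSpace.continuousLinearMapOfBilin_apply B f g
  have hT : ∀ f g, ⟪f, adjoint S g⟫_ℂ = β f g := fun f g => by
    rw [ContinuousLinearMap.adjoint_inner_right, hS]
  refine ⟨adjoint S, isPositive_of_forall fun f => ⟨_, h.pos f, ?_⟩,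
    isPositive_of_forall fun f => ⟨‖f‖^2 - (β f f).re, ?_, ?_⟩, hT⟩
  · rw [hT]; exact h.im_self f
  · have := (Complex.re_le_norm (β f f)).trans (h.bound f f)
    nlinarith
  · rw [ContinuousLinearMap.sub_apply, inner_sub_right, hT, ContinuousLinearMap.one_apply,
      inner_self_eq_norm_sq_to_K, h.im_self f]
    push_cast; simp

theorem Good.of_form {X : H →L[ℂ] H}
    (hX : ∀ f, ∃ s : ℝ, 0 ≤ s ∧ s ≤ ‖f‖^2 ∧ ⟪f, X f⟫_ℂ = s) : Good (fun f g => ⟪f, X g⟫_ℂ) := by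
  have hp : X.IsPositive := isPositive_of_forall fun f => by
    obtain ⟨s, h0, -, h⟩ := hX f; exact ⟨s, h0, h⟩
  have hp1 : (1 - X).IsPositive := isPositive_of_forall fun f => by
    obtain ⟨s, -, h1, h⟩ := hX f
    refine ⟨‖f‖^2 - s, by linarith, ?_⟩
    rw [ContinuousLinearMap.sub_apply, inner_sub_right, h, ContinuousLinearMap.one_apply,
      inner_self_eq_norm_sq_to_K]
    push_cast; simp
  have hn : ‖X‖ ≤ 1 := by
    rw [CStarAlgebra.norm_le_one_iff_of_nonneg X (nonneg_iff_isPositive X |>.2 hp)]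
    exact (ContinuousLinearMap.le_def X 1).2 hp1
  refine ⟨?_, ?_, ?_, ?_, ?_⟩
  · intro f g k; simp [inner_add_right]
  · intro c f g; simp [inner_smul_right]
  · intro f g
    simp only [inner_conj_symm]
    rw [← ContinuousLinearMap.adjoint_inner_left, hp.isSelfAdjoint.adjoint_eq]
  · intro f g
    refine (norm_inner_le_norm _ _).trans ?_
    gcongr
    simpa using X.le_of_opNorm_le hn g
  · intro f
    obtain ⟨s, h0, -, h⟩ := hX f
    simp [h, h0]

theorem Good.avg (μ : Measure ℝ) [IsFiniteMeasure μ] (b : ℝ → H → H → ℂ) (hb : ∀ l, Good (b l))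
    (hm : ∀ f g, Measurable fun l => b l f g) (s : Set ℝ) :
    Good (fun f g => (((μ.real s)⁻¹ : ℝ) : ℂ) * ∫ l in s, b l f g ∂μ) := by
  have hi : ∀ f g, Integrable (fun l => b l f g) (μ.restrict s) := fun f g =>
    Integrable.of_bound (hm f g).aestronglyMeasurable (‖f‖*‖g‖)
      (Eventually.of_forall fun l => (hb l).bound f g)
  refine ⟨?_, ?_, ?_, ?_, ?_⟩
  · intro f g k
    simp_rw [(hb _).add_right]
    rw [integral_add (hi _ _) (hi _ _), mul_add]
  · intro c f g
    simp_rw [(hb _).smul_right]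
    rw [integral_const_mul]; ring
  · intro f g
    have : (fun l => b l g f) = fun l => (starRingEnd ℂ) (b l f g) := by
      funext l; exact (hb l).herm f g
    rw [this, integral_conj, map_mul, Complex.conj_ofReal]
  · intro f g
    have h1 : ‖∫ l in s, b l f g ∂μ‖ ≤ (‖f‖*‖g‖) * μ.real s :=
      norm_setIntegral_le_of_norm_le_const (measure_lt_top μ s)
        (fun l _ => (hb l).bound f g)
    rw [norm_mul, Complex.norm_real, Real.norm_of_nonneg (by positivity)]
    rcases eq_or_lt_of_le (measureReal_nonneg : 0 ≤ μ.real s) with h | h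
    · rw [← h]; simp; positivity
    · rw [inv_mul_le_iff₀ h]; linarith
  · intro f
    rw [Complex.re_ofReal_mul]
    have : (∫ l in s, b l f f ∂μ).re = ∫ l in s, (b l f f).re ∂μ := (integral_re (hi f f)).symm
    rw [this]
    exact mul_nonneg (by positivity) (integral_nonneg fun l => (hb l).pos f)


theorem scalar_limit (U : Ultrafilter ℕ) (μ : Measure ℝ) [IsFiniteMeasure μ] (u : ℕ → ℝ → ℂ) (C : ℝ)
    (hu : ∀ n, Measurable (u n)) (hC : ∀ n l, ‖u n l‖ ≤ C) :
    ∃ ξ : ℝ → ℂ, Measurable ξ ∧ Integrable ξ μ ∧ ∀ h : ℝ → ℂ, Measurable h →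
      (∃ D, ∀ l, ‖h l‖ ≤ D) →
      Tendsto (fun n => ∫ l, h l * u n l ∂μ) U (𝓝 (∫ l, h l * ξ l ∂μ)) := by
  have hC0 : 0 ≤ C := (norm_nonneg _).trans (hC 0 0)
  have hmem : ∀ n, MemLp (fun l => (starRingEnd ℂ) (u n l)) 2 μ := fun n =>
    MemLp.of_bound (Complex.continuous_conj.measurable.comp (hu n)).aestronglyMeasurable C
      (Eventually.of_forall fun l => by simpa using hC n l)
  let v : ℕ → Lp ℂ 2 μ := fun n => (hmem n).toLp
  obtain ⟨R, hR⟩ : ∃ R : ℝ, ∀ n, ‖v n‖ ≤ R := by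
    refine ⟨_, fun n => Lp.norm_le_of_ae_bound (C := C) hC0 ?_⟩
    filter_upwards [(hmem n).coeFn_toLp] with l hl
    rw [hl]; simpa using hC n l
  let w : ℕ → WeakDual ℂ (Lp ℂ 2 μ) := fun n =>
    StrongDual.toWeakDual (InnerProductSpace.toDual ℂ (Lp ℂ 2 μ) (v n))
  obtain ⟨ψ, -, hψ⟩ := (WeakDual.isCompact_closedBall (𝕜 := ℂ) (E := Lp ℂ 2 μ) 0 R).ultrafilter_le_nhds
    (U.map w) (by
      rw [le_principal_iff]
      change _ ∈ Filter.map w (U : Filter ℕ)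
      rw [Filter.mem_map]
      refine Filter.univ_mem' (fun n => ?_)
      change (InnerProductSpace.toDual ℂ (Lp ℂ 2 μ) (v n)) ∈ Metric.closedBall 0 R
      rw [mem_closedBall_zero_iff]
      simpa using hR n)
  have hψ' : Tendsto w U (𝓝 ψ) := hψ
  let x : Lp ℂ 2 μ := (InnerProductSpace.toDual ℂ (Lp ℂ 2 μ)).symm (WeakDual.toStrongDual ψ)
  have hx : ∀ y, ⟪x, y⟫_ℂ = ψ y := fun y => InnerProductSpace.toDual_symm_apply
  have hlim : ∀ y, Tendsto (fun n => ⟪v n, y⟫_ℂ) U (𝓝 ⟪x, y⟫_ℂ) := by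
    intro y
    rw [hx]
    exact ((WeakDual.eval_continuous y).tendsto ψ).comp hψ'
  have hxm : AEStronglyMeasurable (fun l => x l) μ := Lp.aestronglyMeasurable x
  have hxi : Integrable (fun l => x l) μ := (Lp.memLp x).integrable (by norm_num)
  obtain ⟨x', hx'm, hxx⟩ := hxm
  refine ⟨fun l => (starRingEnd ℂ) (x' l), Complex.continuous_conj.measurable.comp hx'm.measurable,
    ?_, ?_⟩
  · have : Integrable x' μ := hxi.congr hxx
    exact (LinearIsometryEquiv.integrable_comp_iff Complex.conjLIE).2 this
  · rintro h hh ⟨D, hD⟩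
    have hhm : MemLp h 2 μ := MemLp.of_bound hh.aestronglyMeasurable D (Eventually.of_forall hD)
    have := hlim hhm.toLp
    have e1 : ⟪x, hhm.toLp⟫_ℂ = ∫ l, h l * (starRingEnd ℂ) (x' l) ∂μ := by
      rw [L2.inner_def]
      refine integral_congr_ae ?_
      filter_upwards [hhm.coeFn_toLp, hxx] with l h1 h2
      rw [h1, h2]; rfl
    have e2 : ∀ n, ⟪v n, hhm.toLp⟫_ℂ = ∫ l, h l * u n l ∂μ := by
      intro n
      rw [L2.inner_def]
      refine integral_congr_ae ?_
      filter_upwards [hhm.coeFn_toLp, (hmem n).coeFn_toLp] with l h1 h2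
      rw [h1, h2]
      change h l * (starRingEnd ℂ) ((starRingEnd ℂ) (u n l)) = _
      simp
    rw [e1] at this
    simpa only [e2] using this


theorem weak_limit [SeparableSpace H] (μ : Measure ℝ) [IsFiniteMeasure μ] (U : Ultrafilter ℕ)
    (hU : (U : Filter ℕ) ≤ atTop)
    (X : ℕ → ℝ → H →L[ℂ] H) (hmeas : ∀ n f g, Measurable fun l => ⟪f, X n l g⟫_ℂ)
    (hform : ∀ n l f, ∃ s : ℝ, 0 ≤ s ∧ s ≤ ‖f‖^2 ∧ ⟪f, X n l f⟫_ℂ = s) :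
    ∃ Ξ : ℝ → H →L[ℂ] H, (∀ l, (Ξ l).IsPositive) ∧ (∀ l, (1 - Ξ l).IsPositive) ∧
      (∀ f g, Measurable fun l => ⟪f, Ξ l g⟫_ℂ) ∧
      ∀ f g, ∀ h : ℝ → ℂ, Measurable h → (∃ C, ∀ l, ‖h l‖ ≤ C) →
        Tendsto (fun n => ∫ l, h l * ⟪f, X n l g⟫_ℂ ∂μ) U (𝓝 (∫ l, h l * ⟪f, Ξ l g⟫_ℂ ∂μ)) := by
  have hb : ∀ n l, Good (fun f g => ⟪f, X n l g⟫_ℂ) := fun n l => Good.of_form (hform n l)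
  have hγ : ∀ x (k : ℕ), _ := fun (x : ℝ) (k : ℕ) => Good.ultra U _ (fun n => Good.avg μ
    (fun l f g => ⟪f, X n l g⟫_ℂ) (hb n) (hmeas n) (Metric.closedBall x (1/((k:ℝ)+1))))
  choose γ hγg hγl using hγ
  have hβ : ∀ x, _ := fun x => Good.ultra U (γ x) (hγg x)
  choose β hβg hβl using hβ
  choose T hTp hTp1 hT using fun x => (hβg x).op
  have hξ : ∀ f g, _ := fun f g => scalar_limit U μ (fun n l => ⟪f, X n l g⟫_ℂ) (‖f‖*‖g‖)
    (fun n => hmeas n f g) (fun n l => (hb n l).bound f g)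
  choose ξ hξm hξi hξl using hξ
  have hγξ : ∀ f g x k, γ x k f g = ⨍ l in Metric.closedBall x (1/((k:ℝ)+1)), ξ f g l ∂μ := by
    intro f g x k
    refine tendsto_nhds_unique (hγl x k f g) ?_
    set s := Metric.closedBall x (1/((k:ℝ)+1)) with hs
    have hsm : MeasurableSet s := Metric.isClosed_closedBall.measurableSet
    have e : ∀ u : ℝ → ℂ, ∫ l in s, u l ∂μ = ∫ l, s.indicator (fun _ => (1:ℂ)) l * u l ∂μ := by
      intro u
      rw [← integral_indicator hsm]
      congr 1
      funext l
      by_cases hl : l ∈ s <;> simp [hl]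
    rw [setAverage_eq, e, Complex.real_smul]
    simp_rw [e]
    refine (hξl f g _ (measurable_const.indicator hsm) ⟨1, fun l => ?_⟩).const_mul _
    by_cases hl : l ∈ s <;> simp [hl]
  have hae : ∀ f g, ∀ᵐ x ∂μ, β x f g = ξ f g x := by
    intro f g
    filter_upwards [(Besicovitch.vitaliFamily μ).ae_tendsto_average
      (hξi f g).locallyIntegrable] with x hx
    refine tendsto_nhds_unique (hβl x f g) ?_
    simp_rw [hγξ]
    have h1 : Tendsto (fun k : ℕ => 1/((k:ℝ)+1)) U (𝓝[>] 0) := by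
      refine Tendsto.mono_left ?_ hU
      refine tendsto_nhdsWithin_iff.2 ⟨tendsto_one_div_add_atTop_nhds_zero_nat,
        Eventually.of_forall fun k => ?_⟩
      simp only [Set.mem_Ioi]; positivity
    exact (hx.comp (Besicovitch.tendsto_filterAt μ x)).comp h1
  let d := denseSeq H
  have hd : DenseRange d := denseRange_denseSeq H
  have hall : ∀ᵐ x ∂μ, ∀ i j, β x (d i) (d j) = ξ (d i) (d j) x :=
    ae_all_iff.2 fun i => ae_all_iff.2 fun j => hae _ _
  obtain ⟨E, hEs, hEm, hE0⟩ := exists_measurable_superset_of_null hall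
  have hE : ∀ x, x ∉ E → ∀ i j, β x (d i) (d j) = ξ (d i) (d j) x := by
    intro x hx
    by_contra hcon
    exact hx (hEs hcon)
  classical
  let Ξ : ℝ → H →L[ℂ] H := fun x => if x ∈ E then 0 else T x
  have hΞd : ∀ i j, Measurable fun l => ⟪d i, Ξ l (d j)⟫_ℂ := by
    intro i j
    have : (fun l => ⟪d i, Ξ l (d j)⟫_ℂ) = Eᶜ.indicator (ξ (d i) (d j)) := by
      funext l
      by_cases hl : l ∈ E
      · simp [Ξ, hl]
      · simp only [Ξ, hl, if_false]
        rw [hT, hE l hl, Set.indicator_of_mem (by exact hl)]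
    rw [this]
    exact (hξm _ _).indicator hEm.compl
  have happ : ∀ f : H, ∃ q : ℕ → ℕ, Tendsto (fun n => d (q n)) atTop (𝓝 f) := by
    intro f
    have : ∀ n : ℕ, ∃ i, dist f (d i) < 1/((n:ℝ)+1) := fun n =>
      hd.exists_dist_lt f (by positivity)
    choose q hq using this
    refine ⟨q, ?_⟩
    rw [tendsto_iff_dist_tendsto_zero]
    refine squeeze_zero (fun _ => dist_nonneg) (fun n => ?_)
      (tendsto_one_div_add_atTop_nhds_zero_nat (𝕜 := ℝ))
    rw [dist_comm]; exact (hq n).le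
  have hΞm : ∀ f g, Measurable fun l => ⟪f, Ξ l g⟫_ℂ := by
    have h1 : ∀ i g, Measurable fun l => ⟪d i, Ξ l g⟫_ℂ := by
      intro i g
      obtain ⟨q, hq⟩ := happ g
      refine measurable_of_tendsto_metrizable (fun n => hΞd i (q n)) ?_
      rw [tendsto_pi_nhds]
      intro l
      exact tendsto_const_nhds.inner (((Ξ l).continuous.tendsto g).comp hq)
    intro f g
    obtain ⟨q, hq⟩ := happ f
    refine measurable_of_tendsto_metrizable (fun n => h1 (q n) g) ?_
    rw [tendsto_pi_nhds]
    intro l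
    exact hq.inner tendsto_const_nhds
  refine ⟨Ξ, ?_, ?_, hΞm, ?_⟩
  · intro l
    by_cases hl : l ∈ E
    · simpa [Ξ, hl] using ContinuousLinearMap.isPositive_zero
    · simpa [Ξ, hl] using hTp l
  · intro l
    by_cases hl : l ∈ E
    · simp only [Ξ, hl, if_true, sub_zero]
      exact ContinuousLinearMap.isPositive_one
    · simpa only [Ξ, hl, if_false] using hTp1 l
  · intro f g h hh hhb
    have e : ∫ l, h l * ⟪f, Ξ l g⟫_ℂ ∂μ = ∫ l, h l * ξ f g l ∂μ := by
      refine integral_congr_ae ?_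
      filter_upwards [hae f g, compl_mem_ae_iff.2 hE0] with l h1 h2
      have h3 : l ∉ E := h2
      simp only [Ξ, h3, if_false]
      rw [hT, h1]
    rw [e]
    exact hξl f g h hh hhb


theorem final_aux [SeparableSpace H]
    (M : ℂ → H →L[ℂ] H) (hM : IsHerglotz M)
    (z₀ : ℂ) (hz₀ : 0 < z₀.im) (hM₀ : IsUnit (M z₀)) :
    ∃ (Ξ : ℝ → H →L[ℂ] H) (C : H →L[ℂ] H),
      IsSelfAdjoint C ∧
      (∀ l : ℝ, IsSelfAdjoint (Ξ l)) ∧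
      (∀ f g : H, Measurable fun l : ℝ => ⟪f, Ξ l g⟫_ℂ) ∧
      (∀ᵐ l ∂(volume : Measure ℝ),
        (Ξ l).IsPositive ∧ ((1 : H →L[ℂ] H) - Ξ l).IsPositive) ∧
      ∀ z : ℂ, 0 < z.im → ∀ f g : H,
        Integrable (fun l : ℝ =>
          (((l : ℂ) - z)⁻¹ - (l : ℂ) * ((1 : ℂ) + (l : ℂ) ^ 2)⁻¹) * ⟪f, Ξ l g⟫_ℂ) ∧
        ⟪f, opLog (M z) g⟫_ℂ = ⟪f, C g⟫_ℂ +
          ∫ l : ℝ, (((l : ℂ) - z)⁻¹ - (l : ℂ) * ((1 : ℂ) + (l : ℂ) ^ 2)⁻¹) * ⟪f, Ξ l g⟫_ℂ := by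
  have hd : ∀ z, 0 < z.im → Diss (M z) := fun z hz => diss_of_imPart (hM.2 z hz)
  have hu : ∀ z, 0 < z.im → IsUnit (M z) := fun z hz => herglotz_isUnit hM hz₀ hM₀ hz
  set L : ℂ → H →L[ℂ] H := fun z => opLog (M z) with hLdef
  have hL : DifferentiableOn ℂ L {z | 0 < z.im} := opLog_differentiableOn hM.1 hd hu
  have hLb : ∀ z, 0 < z.im → ∀ f, 0 ≤ (⟪f, L z f⟫_ℂ).im ∧ (⟪f, L z f⟫_ℂ).im ≤ Real.pi * ‖f‖^2 :=
    fun z hz f => im_opLog_bounds (hd z hz) (hu z hz) f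
  let ρ : ℝ → NNReal := fun l => Real.toNNReal ((1 + l^2)⁻¹)
  have hρm : Measurable ρ := by fun_prop
  have hρ : ∀ l, (ρ l : ℝ) = (1 + l^2)⁻¹ := fun l => Real.coe_toNNReal _ (by positivity)
  let μ : Measure ℝ := volume.withDensity (fun l => (ρ l : ENNReal))
  have hfin : IsFiniteMeasure μ := by
    refine isFiniteMeasure_withDensity ?_
    have := (integrable_inv_one_add_sq).lintegral_lt_top
    exact this.ne
  have hμ : ∀ F : ℝ → ℂ, ∫ l, F l ∂μ = ∫ l, (((1 + l^2)⁻¹ : ℝ) : ℂ) * F l := by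
    intro F
    rw [integral_withDensity_eq_integral_smul hρm]
    congr 1
    funext l
    rw [NNReal.smul_def, hρ, Complex.real_smul]
  let r : ℕ → ℝ := fun n => 1 - 1/((n:ℝ)+1)
  have hr0 : ∀ n, 0 ≤ r n := fun n => by
    have : 1/((n:ℝ)+1) ≤ 1 := by
      rw [div_le_one (by positivity)]; linarith [(Nat.cast_nonneg n : (0:ℝ) ≤ n)]
    simp only [r]; linarith
  have hr1 : ∀ n, r n < 1 := fun n => by
    have : 0 < 1/((n:ℝ)+1) := by positivity
    simp only [r]; linarith
  have hrl : Tendsto r atTop (𝓝 1) := by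
    have := (tendsto_const_nhds (x := (1:ℝ))).sub (tendsto_one_div_add_atTop_nhds_zero_nat (𝕜 := ℝ))
    simpa [r] using this
  have hU : (hyperfilter ℕ : Filter ℕ) ≤ atTop := by
    rw [← Nat.cofinite_eq_atTop]; exact hyperfilter_le_cofinite
  obtain ⟨Ξ, hp, hp1, hm, hlim⟩ := weak_limit μ (hyperfilter ℕ) hU (fun n l => apx L (r n) l)
    (fun n f g => (apx_continuous hL (hr0 n) (hr1 n) f g).measurable)
    (fun n l f => apx_form hLb (hr0 n) (hr1 n) l f)
  have hbd : ∀ f g l, ‖⟪f, Ξ l g⟫_ℂ‖ ≤ ‖f‖ * ‖g‖ := by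
    intro f g l
    have hn : ‖Ξ l‖ ≤ 1 := by
      rw [CStarAlgebra.norm_le_one_iff_of_nonneg (Ξ l) (nonneg_iff_isPositive (Ξ l) |>.2 (hp l))]
      exact (ContinuousLinearMap.le_def (Ξ l) 1).2 (hp1 l)
    refine (norm_inner_le_norm _ _).trans ?_
    gcongr
    simpa using (Ξ l).le_of_opNorm_le hn g
  refine ⟨Ξ, (2:ℂ)⁻¹ • (L I + adjoint (L I)), ?_, fun l => (hp l).isSelfAdjoint, hm,
    Eventually.of_forall fun l => ⟨hp l, hp1 l⟩, ?_⟩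
  · rw [← star_eq_adjoint, IsSelfAdjoint, star_smul, star_add, star_star, add_comm]
    congr 1
    simp
  intro z hz f g
  obtain ⟨K, hK⟩ := kernel_bounded hz
  have hkm : Measurable (fun l : ℝ => (1 + (l:ℂ) * z)/((l:ℂ) - z)) := by fun_prop
  have heq : (fun l : ℝ => (((l : ℂ) - z)⁻¹ - (l : ℂ) * ((1 : ℂ) + (l : ℂ) ^ 2)⁻¹) * ⟪f, Ξ l g⟫_ℂ)
      = fun l : ℝ => (((1 + l^2)⁻¹ : ℝ) : ℂ) * ((1 + (l:ℂ) * z)/((l:ℂ) - z) * ⟪f, Ξ l g⟫_ℂ) := by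
    funext l
    rw [kernel_eq2 hz l, mul_assoc]
  rw [heq]
  constructor
  · have h1 : Integrable (fun l : ℝ => (((1 + l^2)⁻¹ : ℝ) : ℂ)) := integrable_inv_one_add_sq.ofReal
    refine h1.mul_bdd (c := K * (‖f‖*‖g‖)) (hkm.mul (hm f g)).aestronglyMeasurable
      (Eventually.of_forall fun l => ?_)
    rw [norm_mul]
    exact mul_le_mul (hK l) (hbd f g l) (norm_nonneg _) ((norm_nonneg _).trans (hK l))
  · have h1 := hlim f g _ hkm ⟨K, hK⟩
    rw [hμ] at h1
    simp_rw [hμ] at h1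
    have h2 : ∀ n, _ := fun n => schwarz_op hL (hr0 n) (hr1 n) hz f g
    simp_rw [h2] at h1
    have h3 : Tendsto (fun n => L (phi (r n * cayC z))) atTop (𝓝 (L z)) := by
      have hc : ContinuousAt L z := (hL.differentiableAt
        ((isOpen_lt continuous_const Complex.continuous_im).mem_nhds hz)).continuousAt
      have hph : Tendsto (fun n => phi (r n * cayC z)) atTop (𝓝 z) := by
        have h4 : ContinuousAt phi (cayC z) := (phi_diff (cayC_norm hz)).continuousAt
        have h5 : Tendsto (fun n => (r n : ℂ) * cayC z) atTop (𝓝 (cayC z)) := by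
          have := ((Complex.continuous_ofReal.tendsto 1).comp hrl).mul_const (cayC z)
          simpa using this
        have := h4.tendsto.comp h5
        rwa [phi_cayC hz] at this
      exact hc.tendsto.comp hph
    have h6 : Tendsto (fun n => ⟪f, L (phi (r n * cayC z)) g⟫_ℂ) atTop (𝓝 ⟪f, L z g⟫_ℂ) :=
      tendsto_const_nhds.inner (((ContinuousLinearMap.apply ℂ H g).continuous.tendsto _).comp h3)
    have h7 := tendsto_nhds_unique h1 ((h6.mono_left hU).sub tendsto_const_nhds)
    rw [h7]; ring

/-- Theorem 2.8 (first part): operator-valued exponential Herglotz representation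
`log M(z) = C + ∫ Ξ(λ) ((λ-z)⁻¹ - λ(1+λ²)⁻¹) dλ` (weak sense) with a weakly measurable
family of self-adjoint operators `0 ≤ Ξ(λ) ≤ I` a.e. and `C = C*`. -/
theorem opLog_herglotz_representation [SeparableSpace H]
    (M : ℂ → H →L[ℂ] H) (hM : IsHerglotz M)
    (z₀ : ℂ) (hz₀ : 0 < z₀.im) (hM₀ : IsUnit (M z₀)) :
    ∃ (Ξ : ℝ → H →L[ℂ] H) (C : H →L[ℂ] H),
      IsSelfAdjoint C ∧
      (∀ l : ℝ, IsSelfAdjoint (Ξ l)) ∧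
      (∀ f g : H, Measurable fun l : ℝ => ⟪f, Ξ l g⟫_ℂ) ∧
      (∀ᵐ l ∂(volume : Measure ℝ),
        (Ξ l).IsPositive ∧ ((1 : H →L[ℂ] H) - Ξ l).IsPositive) ∧
      ∀ z : ℂ, 0 < z.im → ∀ f g : H,
        Integrable (fun l : ℝ =>
          (((l : ℂ) - z)⁻¹ - (l : ℂ) * ((1 : ℂ) + (l : ℂ) ^ 2)⁻¹) * ⟪f, Ξ l g⟫_ℂ) ∧
        ⟪f, opLog (M z) g⟫_ℂ = ⟪f, C g⟫_ℂ +
          ∫ l : ℝ, (((l : ℂ) - z)⁻¹ - (l : ℂ) * ((1 : ℂ) + (l : ℂ) ^ 2)⁻¹) * ⟪f, Ξ l g⟫_ℂ := by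
  exact final_aux M hM z₀ hz₀ hM₀

end SpectralShift
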